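/- Generalized Clebsch–Gordan integral of three Legendre functions of equal degree: for every ν ∈ ℂ such that ν ∉ ℤ and 3ν ∉ ℤ, ∫_{−1}^1 [P_ν(x)]² P_ν(−x) dx = ((1 + 2 cos(πν))/3) · π Γ((ν+1)/2) Γ((3ν+2)/2) / ( [Γ((1−ν)/2)]² [Γ((ν+2)/2)]³ Γ((3ν+3)/2) ). -/

import Mathlib

open Real MeasureTheory intervalIntegral

/-- Legendre function of the first kind of complex degree `ν`, defined on `(-1, 1]`
via the Mehler–Dirichlet integral. -/
noncomputable def legendreP (ν : ℂ) (x : ℝ) : ℂ :=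
  if x = 1 then 1
  else ((2 / π : ℝ) : ℂ) *
    ∫ β in (0:ℝ)..(Real.arccos x),
      Complex.cos ((2*ν + 1) * (β:ℂ) / 2) / ((Real.sqrt (2 * (Real.cos β - x)) : ℝ) : ℂ)

/-- power series with complex coefficients in a real variable -/
noncomputable def lgPs (a : ℕ → ℂ) (t : ℝ) : ℂ := ∑' k, a k * (t:ℂ)^k

lemma lgPs_summable {a : ℕ → ℂ} {C t : ℝ} (ha : ∀ k, ‖a k‖ ≤ C) (ht : |t| < 1) :
    Summable fun k => a k * (t:ℂ)^k := by
  have h : Summable fun k : ℕ => C * |t|^k :=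
    (summable_geometric_of_lt_one (abs_nonneg t) ht).mul_left C
  refine Summable.of_norm_bounded h fun k => ?_
  rw [norm_mul, norm_pow, Complex.norm_real, Real.norm_eq_abs]
  exact mul_le_mul_of_nonneg_right (ha k) (by positivity)

lemma lgPs_hasSum {a : ℕ → ℂ} {C t : ℝ} (ha : ∀ k, ‖a k‖ ≤ C) (ht : |t| < 1) :
    HasSum (fun k => a k * (t:ℂ)^k) (lgPs a t) := (lgPs_summable ha ht).hasSum

lemma lgPs_deriv_summable {a : ℕ → ℂ} {C t : ℝ} (ha : ∀ k, ‖a k‖ ≤ C) (ht : |t| < 1) :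
    Summable fun k : ℕ => (((k:ℂ)+1) * a (k+1)) * (t:ℂ)^k := by
  have h0 : Summable fun k : ℕ => ((k:ℝ)^1 * |t|^k) :=
    summable_pow_mul_geometric_of_norm_lt_one 1 (by simpa using ht)
  have h1 := summable_geometric_of_lt_one (abs_nonneg t) ht
  have h : Summable fun k : ℕ => C * ((k:ℝ)^1 * |t|^k + |t|^k) := (h0.add h1).mul_left C
  refine Summable.of_norm_bounded h fun k => ?_
  rw [norm_mul, norm_mul, norm_pow, Complex.norm_real, Real.norm_eq_abs]
  have e : ‖(k:ℂ)+1‖ = (k:ℝ)+1 := by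
    have : ((k:ℂ)+1) = ((k+1 : ℕ):ℂ) := by push_cast; rfl
    rw [this, Complex.norm_natCast]; push_cast; rfl
  rw [e]
  have := ha (k+1)
  have h2 : 0 ≤ |t|^k := by positivity
  have h3 : (0:ℝ) ≤ (k:ℝ)+1 := by positivity
  calc ((k:ℝ)+1) * ‖a (k+1)‖ * |t|^k ≤ ((k:ℝ)+1) * C * |t|^k := by gcongr
    _ = _ := by ring

lemma lgPs_hasDerivAt {a : ℕ → ℂ} {C t : ℝ} (ha : ∀ k, ‖a k‖ ≤ C) (ht : |t| < 1) :
    HasDerivAt (lgPs a) (lgPs (fun k => ((k:ℂ)+1) * a (k+1)) t) t := by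
  obtain ⟨r, hr1, hr2⟩ := exists_between ht
  have hr0 : 0 ≤ r := (abs_nonneg t).trans hr1.le
  have hC : 0 ≤ C := (norm_nonneg _).trans (ha 0)
  have hu : Summable fun k : ℕ => C * ((k:ℝ) * r^(k-1)) := by
    apply Summable.mul_left
    rw [← summable_nat_add_iff 1]
    have h0 : Summable fun k : ℕ => ((k:ℝ)^1 * r^k) :=
      summable_pow_mul_geometric_of_norm_lt_one 1 (by rwa [Real.norm_eq_abs, abs_of_nonneg hr0])
    have h1 := summable_geometric_of_lt_one hr0 hr2
    refine (h0.add h1).congr fun k => ?_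
    simp; ring
  have key := hasDerivAt_tsum_of_isPreconnected (𝕜 := ℝ) (F := ℂ)
    (g := fun k (x:ℝ) => a k * (x:ℂ)^k) (g' := fun k (x:ℝ) => a k * ((k:ℂ) * (x:ℂ)^(k-1)))
    (u := fun k : ℕ => C * ((k:ℝ) * r^(k-1))) (t := Set.Ioo (-r) r) (y₀ := t) (y := t)
    hu isOpen_Ioo isPreconnected_Ioo ?_ ?_ (abs_lt.mp hr1) (lgPs_summable ha ht) (abs_lt.mp hr1)
  · have : (∑' k : ℕ, a k * ((k:ℂ) * (t:ℂ)^(k-1))) = lgPs (fun k => ((k:ℂ)+1) * a (k+1)) t := by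
      have hs : Summable fun k : ℕ => a k * ((k:ℂ) * (t:ℂ)^(k-1)) := by
        rw [← summable_nat_add_iff 1]
        refine (lgPs_deriv_summable ha ht).congr fun k => ?_
        simp; ring
      rw [hs.tsum_eq_zero_add]
      simp only [Nat.cast_zero, zero_mul, mul_zero, zero_add, lgPs]
      refine tsum_congr fun k => ?_
      simp; ring
    rw [← this]
    exact key
  · intro k x _
    have h1 : HasDerivAt (fun x : ℝ => (x:ℂ)^k) ((k:ℂ) * (x:ℂ)^(k-1)) x := by
      have := (hasDerivAt_pow k (x:ℂ)).comp_ofReal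
      simpa using this
    exact h1.const_mul _
  · intro k x hx
    have hx' : |x| ≤ r := (abs_lt.mpr hx).le
    rw [norm_mul, norm_mul, norm_pow, Complex.norm_real, Real.norm_eq_abs, Complex.norm_natCast]
    have := ha k
    gcongr

lemma lgPs_deriv_hasSum {a : ℕ → ℂ} {C t : ℝ} (ha : ∀ k, ‖a k‖ ≤ C) (ht : |t| < 1) :
    HasSum (fun k : ℕ => (((k:ℂ)+1) * a (k+1)) * (t:ℂ)^k) (lgPs (fun k => ((k:ℂ)+1) * a (k+1)) t) :=
  (lgPs_deriv_summable ha ht).hasSum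

/-- shift of coefficients -/
def lgShift (a : ℕ → ℂ) : ℕ → ℂ
  | 0 => 0
  | k+1 => a k

lemma lgShift_hasSum {a : ℕ → ℂ} {t s : ℂ} (h : HasSum (fun k => a k * t^k) s) :
    HasSum (fun k => lgShift a k * t^k) (t * s) := by
  rw [← hasSum_nat_add_iff' 1]
  simp only [Finset.range_one, Finset.sum_singleton, lgShift, zero_mul, sub_zero]
  refine (h.mul_left t).congr_fun fun k => ?_
  ring

/-- Legendre coefficients -/
noncomputable def lgA (ν : ℂ) : ℕ → ℂ
  | 0 => 1
  | k+1 => lgA ν k * (((k:ℂ) - ν) * ((k:ℂ) + ν + 1)) / ((k:ℂ)+1)^2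

/-- Wallis-free coefficients -/
noncomputable def lgD (ν : ℂ) : ℕ → ℂ
  | 0 => 1
  | k+1 => lgD ν k * (((k:ℂ) - ν) * ((k:ℂ) + ν + 1)) / (((k:ℂ)+1/2) * ((k:ℂ)+1))

lemma lg_succ_ne (k : ℕ) : (k:ℂ) + 1 ≠ 0 := by exact_mod_cast Nat.succ_ne_zero k
lemma lg_half_ne (k : ℕ) : (k:ℂ) + 1/2 ≠ 0 := by
  intro h
  have := congrArg Complex.re h
  simp at this
  have h2 : (0:ℝ) ≤ k := Nat.cast_nonneg k
  linarith
lemma lg_two_ne (k : ℕ) : 2*(k:ℂ) + 1 ≠ 0 := by exact_mod_cast Nat.succ_ne_zero (2*k)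

lemma lg_norm_succ (k : ℕ) : ‖(k:ℂ) + 1‖ = (k:ℝ)+1 := by
  have : ((k:ℂ)+1) = ((k+1 : ℕ):ℂ) := by push_cast; rfl
  rw [this, Complex.norm_natCast]; push_cast; rfl

/-- the numbers `k a_k` satisfy `(k+1) a_{k+1} = k a_k - N a_k/(k+1)` -/
lemma lgA_step (ν : ℂ) (k : ℕ) :
    ((k:ℂ)+1) * lgA ν (k+1) = (k:ℂ) * lgA ν k - ν*(ν+1) * (lgA ν k / ((k:ℂ)+1)) := by
  have h := lg_succ_ne k
  rw [lgA]; field_simp; ring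

lemma lgA_bound (ν : ℂ) : ∃ C : ℝ, ∀ k : ℕ, ((k:ℝ)+1) * ‖lgA ν (k+1)‖ ≤ C := by
  set M := ‖ν*(ν+1)‖ with hM
  have hM0 : 0 ≤ M := norm_nonneg _
  have hb : ∀ k : ℕ, ((k:ℝ)+1) * ‖lgA ν (k+1)‖ ≤ M * Real.exp (M * (2 - 1/((k:ℝ)+1))) := by
    intro k
    induction k with
    | zero =>
      have h1 : lgA ν 1 = - (ν*(ν+1)) := by simp [lgA]
      rw [h1]; simp only [Nat.cast_zero, zero_add, norm_neg, one_mul]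
      rw [← hM]
      have : 1 ≤ Real.exp (M * (2 - 1/1)) := Real.one_le_exp (by norm_num; exact hM0)
      nlinarith
    | succ k ih =>
      have h := lgA_step ν (k+1)
      have e1 : ‖(((k+1:ℕ):ℂ)+1) * lgA ν (k+1+1)‖ = (((k+1:ℕ):ℝ)+1) * ‖lgA ν (k+1+1)‖ := by
        rw [norm_mul, lg_norm_succ]
      rw [← e1, h]
      have hk : (0:ℝ) < (k:ℝ)+1 := by positivity
      have hk2 : (0:ℝ) < (k:ℝ)+2 := by positivity
      have e2 : ‖((k+1:ℕ):ℂ) * lgA ν (k+1)‖ = ((k:ℝ)+1) * ‖lgA ν (k+1)‖ := by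
        rw [norm_mul]; push_cast; rw [lg_norm_succ]
      have e3 : ‖ν*(ν+1) * (lgA ν (k+1) / (((k+1:ℕ):ℂ)+1))‖
          = ((k:ℝ)+1) * ‖lgA ν (k+1)‖ * (M / (((k:ℝ)+1)*((k:ℝ)+2))) := by
        rw [norm_mul, norm_div, lg_norm_succ, ← hM]; push_cast
        field_simp; ring
      set X := ((k:ℝ)+1) * ‖lgA ν (k+1)‖
      set d := M / (((k:ℝ)+1)*((k:ℝ)+2)) with hd
      have hd0 : 0 ≤ d := by positivity
      calc _ ≤ X + X * d := (norm_sub_le _ _).trans (le_of_eq (by rw [e2, e3]))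
        _ = X * (1 + d) := by ring
        _ ≤ (M * Real.exp (M * (2 - 1/((k:ℝ)+1)))) * Real.exp d := by
            have : 1 + d ≤ Real.exp d := by linarith [Real.add_one_le_exp d]
            gcongr
        _ = _ := by
            rw [mul_assoc, ← Real.exp_add]
            congr 2
            rw [hd]; push_cast; field_simp; ring
  refine ⟨M * Real.exp (M * 2), fun k => (hb k).trans ?_⟩
  have : (0:ℝ) ≤ 1/((k:ℝ)+1) := by positivity
  gcongr
  linarith

lemma lgA_bound' (ν : ℂ) : ∃ C : ℝ, ∀ k : ℕ, ‖lgA ν k‖ ≤ C := by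
  obtain ⟨C, hC⟩ := lgA_bound ν
  refine ⟨max 1 C, fun k => ?_⟩
  cases k with
  | zero => simp [lgA]
  | succ k =>
    refine le_trans ?_ ((hC k).trans (le_max_right _ _))
    have : (1:ℝ) ≤ (k:ℝ)+1 := by linarith [(Nat.cast_nonneg k : (0:ℝ) ≤ k)]
    nlinarith [norm_nonneg (lgA ν (k+1))]

/-- Wallis numbers -/
noncomputable def lgW : ℕ → ℝ
  | 0 => 1
  | k+1 => lgW k * ((2*(k:ℝ)+1) / (2*(k:ℝ)+2))

lemma lgD_mul (ν : ℂ) (k : ℕ) : lgD ν k * (lgW k : ℂ) = lgA ν k := by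
  induction k with
  | zero => simp [lgA, lgD, lgW]
  | succ k ih =>
    have h := lg_succ_ne k
    have h2 := lg_half_ne k
    have h3 := lg_two_ne k
    have h4 : 2*(k:ℂ)+2 ≠ 0 := by
      have : 2*(k:ℂ)+2 = 2 * ((k:ℂ)+1) := by ring
      rw [this]; exact mul_ne_zero two_ne_zero h
    rw [lgA, lgD, lgW, ← ih]; push_cast
    have h5 : (k:ℂ)*2+1 ≠ 0 := by rw [mul_comm]; exact h3
    field_simp

lemma lgW_lower (k : ℕ) : 1 ≤ lgW (k+1) * (2*((k:ℝ)+1)) := by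
  induction k with
  | zero => simp [lgW]
  | succ k ih =>
    rw [lgW]; push_cast
    have e : lgW (k+1) * ((2*((k:ℝ)+1)+1)/(2*((k:ℝ)+1)+2)) * (2*((k:ℝ)+1+1))
      = lgW (k+1) * (2*((k:ℝ)+1)) + lgW (k+1) := by field_simp
    rw [e]
    have : 0 ≤ lgW (k+1) := by
      have : 0 < 2*((k:ℝ)+1) := by positivity
      by_contra hneg
      push Not at hneg
      nlinarith
    linarith

lemma lgD_bound (ν : ℂ) : ∃ C : ℝ, ∀ k : ℕ, ‖lgD ν k‖ ≤ C := by
  obtain ⟨C, hC⟩ := lgA_bound ν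
  refine ⟨max 1 (2*C), fun k => ?_⟩
  cases k with
  | zero => simp [lgD]
  | succ k =>
    refine le_trans ?_ (le_max_right _ _)
    have h1 := lgW_lower k
    have h2 := hC k
    rw [← lgD_mul, norm_mul, Complex.norm_real, Real.norm_eq_abs] at h2
    have h3 := le_abs_self (lgW (k+1))
    have hk : (0:ℝ) < (k:ℝ)+1 := by positivity
    have hn := norm_nonneg (lgD ν (k+1))
    have h4 : 1 ≤ |lgW (k+1)| * (2*((k:ℝ)+1)) := h1.trans (by gcongr)
    calc ‖lgD ν (k+1)‖ = ‖lgD ν (k+1)‖ * 1 := by ring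
      _ ≤ ‖lgD ν (k+1)‖ * (|lgW (k+1)| * (2*((k:ℝ)+1))) := by gcongr
      _ = 2 * (((k:ℝ)+1) * (‖lgD ν (k+1)‖ * |lgW (k+1)|)) := by ring
      _ ≤ _ := by linarith

lemma lg_sinsq_lt {y : ℝ} (hy : y ∈ Set.Ioo (-(π/2)) (π/2)) : |Real.sin y ^ 2| < 1 := by
  rw [abs_of_nonneg (sq_nonneg _)]
  have := Real.cos_pos_of_mem_Ioo hy
  nlinarith [Real.sin_sq_add_cos_sq y]

lemma lg_cos_series (ν : ℂ) {y : ℝ} (hy : y ∈ Set.Ioo (-(π/2)) (π/2)) :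
    Complex.cos ((2*ν+1) * (y:ℂ)) = (Real.cos y : ℂ) * lgPs (lgD ν) (Real.sin y ^ 2) := by
  obtain ⟨C, hC⟩ := lgD_bound ν
  set b : ℕ → ℂ := fun k => lgD ν k / (2*(k:ℂ)+1) with hb
  have hCb : ∀ k, ‖b k‖ ≤ C := by
    intro k
    rw [hb]; simp only [norm_div]
    have : (1:ℝ) ≤ ‖2*(k:ℂ)+1‖ := by
      have e : (2*(k:ℂ)+1) = ((2*k+1:ℕ):ℂ) := by push_cast; rfl
      rw [e, Complex.norm_natCast]
      exact_mod_cast Nat.le_add_left 1 (2*k)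
    exact (div_le_self (norm_nonneg _) this).trans (hC k)
  set μ : ℂ := 2*ν+1 with hμ
  set φ' : ℝ → ℂ := lgPs (fun k => ((k:ℂ)+1) * lgD ν (k+1))
  set ω' : ℝ → ℂ := lgPs (fun k => ((k:ℂ)+1) * b (k+1))
  have rel1 : ∀ v : ℝ, |v| < 1 → lgPs b v + 2 * ((v:ℂ) * ω' v) = lgPs (lgD ν) v := by
    intro v hv
    have h1 := (lgPs_hasSum hCb hv).add ((lgShift_hasSum (lgPs_deriv_hasSum hCb hv)).mul_left 2)
    refine h1.unique ((lgPs_hasSum hC hv).congr_fun ?_)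
    intro k
    cases k with
    | zero => simp [lgShift, hb]
    | succ k =>
      simp only [lgShift, hb]
      have := lg_two_ne (k+1)
      push_cast at this ⊢
      field_simp
      ring
  have rel2 : ∀ v : ℝ, |v| < 1 →
      2 * (φ' v) - 2 * ((v:ℂ) * φ' v) - lgPs (lgD ν) v = - (μ^2) * lgPs b v := by
    intro v hv
    have h1 := (((lgPs_deriv_hasSum hC hv).mul_left 2).sub
      ((lgShift_hasSum (lgPs_deriv_hasSum hC hv)).mul_left 2)).sub (lgPs_hasSum hC hv)
    refine h1.unique (((lgPs_hasSum hCb hv).mul_left (-(μ^2))).congr_fun ?_)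
    intro k
    have e0 := lg_two_ne k
    have e1 := lg_succ_ne k
    have e2 := lg_half_ne k
    have e3 : ((k:ℂ)+1) * lgD ν (k+1) = lgD ν k * (((k:ℂ) - ν) * ((k:ℂ) + ν + 1)) * 2 / (2*(k:ℂ)+1) := by
      rw [lgD]; field_simp
    rw [e3]
    have e4 : lgShift (fun k => ((k:ℂ)+1) * lgD ν (k+1)) k = k * lgD ν k := by
      cases k with
      | zero => simp [lgShift]
      | succ k => simp [lgShift]
    rw [e4]
    simp only [hb, hμ]
    field_simp
    ring
  -- derivatives
  set I := Set.Ioo (-(π/2)) (π/2) with hI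
  have dsq : ∀ y : ℝ, HasDerivAt (fun y : ℝ => Real.sin y ^ 2) (2 * Real.sin y * Real.cos y) y := by
    intro y; simpa using (Real.hasDerivAt_sin y).fun_pow 2
  set h : ℝ → ℂ := fun y => (Real.cos y : ℂ) * lgPs (lgD ν) (Real.sin y ^ 2) with hh
  set W : ℝ → ℂ := fun y => (Real.sin y : ℂ) * lgPs b (Real.sin y ^ 2) with hW
  have dh : ∀ y ∈ I, HasDerivAt h (-(μ^2) * W y) y := by
    intro y hy
    have hv := lg_sinsq_lt hy
    have d1 := (lgPs_hasDerivAt hC hv).scomp y (dsq y)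
    have d2 : HasDerivAt (fun y : ℝ => (Real.cos y : ℂ)) ((-Real.sin y : ℝ) : ℂ) y :=
      (Real.hasDerivAt_cos y).ofReal_comp
    have d3 := d2.mul d1
    refine d3.congr_deriv ?_
    have r2 := rel2 _ hv
    have hc : (Real.cos y : ℂ)^2 = 1 - (Real.sin y : ℂ)^2 := by
      have := Real.cos_sq' y
      exact_mod_cast this
    simp only [Function.comp, Complex.real_smul]
    push_cast at r2 ⊢
    rw [hW]
    push_cast at hc ⊢
    linear_combination (2 * Complex.sin y * φ' (Real.sin y ^ 2)) * hc + Complex.sin y * r2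
  have dW : ∀ y ∈ I, HasDerivAt W (h y) y := by
    intro y hy
    have hv := lg_sinsq_lt hy
    have d1 := (lgPs_hasDerivAt hCb hv).scomp y (dsq y)
    have d2 : HasDerivAt (fun y : ℝ => (Real.sin y : ℂ)) ((Real.cos y : ℝ) : ℂ) y :=
      (Real.hasDerivAt_sin y).ofReal_comp
    have d3 := d2.mul d1
    refine d3.congr_deriv ?_
    have r1 := rel1 _ hv
    simp only [Function.comp, Complex.real_smul]
    rw [hh]
    push_cast at r1 ⊢
    linear_combination Complex.cos y * r1
  have dl : ∀ y : ℝ, HasDerivAt (fun y : ℝ => μ * (y:ℂ)) μ y := by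
    intro y
    simpa using ((Complex.ofRealCLM.hasDerivAt (x := y)).const_mul μ)
  have dc : ∀ y : ℝ, HasDerivAt (fun y : ℝ => Complex.cos (μ * (y:ℂ))) (-Complex.sin (μ * y) * μ) y :=
    fun y => HasDerivAt.comp (h₂ := Complex.cos) y (Complex.hasDerivAt_cos (μ * (y:ℂ))) (dl y)
  have ds : ∀ y : ℝ, HasDerivAt (fun y : ℝ => Complex.sin (μ * (y:ℂ))) (Complex.cos (μ * y) * μ) y :=
    fun y => HasDerivAt.comp (h₂ := Complex.sin) y (Complex.hasDerivAt_sin (μ * (y:ℂ))) (dl y)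
  have h0 : (0:ℝ) ∈ I := ⟨by linarith [Real.pi_pos], by linarith [Real.pi_pos]⟩
  have hz : ∀ a : ℕ → ℂ, lgPs a 0 = a 0 := by
    intro a
    rw [lgPs, tsum_eq_single 0]
    · simp
    · intro k hk; simp [hk]
  have c1 : ∀ y ∈ I, HasDerivAt (fun y : ℝ => h y * Complex.cos (μ*y) + μ * W y * Complex.sin (μ*y)) 0 y := by
    intro y hy
    refine (((dh y hy).mul (dc y)).add (((dW y hy).const_mul μ).mul (ds y))).congr_deriv ?_
    ring
  have c2 : ∀ y ∈ I, HasDerivAt (fun y : ℝ => h y * Complex.sin (μ*y) - μ * W y * Complex.cos (μ*y)) 0 y := by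
    intro y hy
    refine (((dh y hy).mul (ds y)).sub (((dW y hy).const_mul μ).mul (dc y))).congr_deriv ?_
    ring
  have k1 := isOpen_Ioo.is_const_of_deriv_eq_zero (𝕜 := ℝ) isPreconnected_Ioo
    (fun y hy => (c1 y hy).differentiableAt.differentiableWithinAt) (fun y hy => (c1 y hy).deriv) hy h0
  have k2 := isOpen_Ioo.is_const_of_deriv_eq_zero (𝕜 := ℝ) isPreconnected_Ioo
    (fun y hy => (c2 y hy).differentiableAt.differentiableWithinAt) (fun y hy => (c2 y hy).deriv) hy h0
  have hh0 : h 0 = 1 := by simp [hh, hz, lgD]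
  have hW0 : W 0 = 0 := by simp [hW]
  simp only [hh0, hW0, Complex.ofReal_zero, mul_zero, Complex.cos_zero, Complex.sin_zero] at k1 k2
  have cs := Complex.sin_sq_add_cos_sq (μ * y)
  change _ = h y
  linear_combination (-Complex.cos (μ*y)) * k1 - Complex.sin (μ*y) * k2 + h y * cs

/-- Mehler kernel after substitution -/
noncomputable def lgK (ν : ℂ) (u : ℝ) : ℂ :=
  Complex.cos ((2*ν+1) * (Real.arcsin u : ℂ)) / (Real.sqrt (1-u^2) : ℂ)

lemma lgK_eq (ν : ℂ) {u : ℝ} (hu : |u| < 1) : lgK ν u = lgPs (lgD ν) (u^2) := by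
  have h := abs_lt.mp hu
  have hy : Real.arcsin u ∈ Set.Ioo (-(π/2)) (π/2) :=
    ⟨Real.neg_pi_div_two_lt_arcsin.mpr h.1, Real.arcsin_lt_pi_div_two.mpr h.2⟩
  have h1 := lg_cos_series ν hy
  rw [Real.sin_arcsin h.1.le h.2.le, Real.cos_arcsin] at h1
  have hpos : 0 < Real.sqrt (1-u^2) := Real.sqrt_pos.mpr (by nlinarith)
  rw [lgK, h1]
  have : (Real.sqrt (1-u^2) : ℂ) ≠ 0 := by exact_mod_cast hpos.ne'
  field_simp

lemma lgK_continuousOn (ν : ℂ) : ContinuousOn (lgK ν) (Set.Ioo (-1) 1) := by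
  unfold lgK
  apply ContinuousOn.div
  · apply Continuous.continuousOn
    have := Real.continuous_arcsin
    fun_prop
  · apply Continuous.continuousOn
    fun_prop
  · intro u hu
    have hpos : 0 < Real.sqrt (1-u^2) := Real.sqrt_pos.mpr (by nlinarith [hu.1, hu.2])
    exact_mod_cast hpos.ne'

lemma lg_ssin {s : ℝ} (hs0 : 0 < s) (hs1 : s < 1) (φ : ℝ) : s * Real.sin φ ∈ Set.Ioo (-1) 1 := by
  have h1 := Real.sin_le_one φ
  have h2 := Real.neg_one_le_sin φ
  constructor <;> nlinarith

lemma lgK_comp_continuous (ν : ℂ) {s : ℝ} (hs0 : 0 < s) (hs1 : s < 1) :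
    Continuous fun φ : ℝ => lgK ν (s * Real.sin φ) :=
  (lgK_continuousOn ν).comp_continuous (by fun_prop) (lg_ssin hs0 hs1)

lemma lg_arccos {x : ℝ} (hx : x ∈ Set.Ioo (-1:ℝ) 1) :
    Real.arccos x = 2 * Real.arcsin (Real.sqrt ((1-x)/2)) := by
  have h0 : 0 ≤ (1-x)/2 := by linarith [hx.2]
  have hs := Real.sq_sqrt h0
  set s := Real.sqrt ((1-x)/2)
  have hs0 : 0 ≤ s := Real.sqrt_nonneg _
  have hs1 : s ≤ 1 := by nlinarith [hx.1]
  have e : x = Real.cos (2 * Real.arcsin s) := by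
    rw [Real.cos_two_mul', Real.sin_arcsin (by linarith) hs1, Real.cos_arcsin, Real.sq_sqrt (by nlinarith)]
    linarith
  conv_lhs => rw [e]
  rw [Real.arccos_cos]
  · have := Real.arcsin_nonneg.mpr hs0; linarith
  · have := Real.arcsin_le_pi_div_two s; linarith

lemma lg_mehler (ν : ℂ) {x : ℝ} (hx : x ∈ Set.Ioo (-1:ℝ) 1) :
    legendreP ν x = ((2/π : ℝ):ℂ) *
      ∫ φ in (0:ℝ)..(π/2), lgK ν (Real.sqrt ((1-x)/2) * Real.sin φ) := by
  have h0 : 0 < (1-x)/2 := by linarith [hx.2]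
  have hsq := Real.sq_sqrt h0.le
  rw [legendreP, if_neg (by linarith [hx.2] : x ≠ 1), lg_arccos hx]
  set s := Real.sqrt ((1-x)/2)
  have hs0 : 0 < s := Real.sqrt_pos.mpr h0
  have hs1 : s < 1 := by nlinarith [hx.1]
  have hpi := Real.pi_pos
  congr 1
  have hθ : 0 < Real.arcsin s := Real.arcsin_pos.mpr hs0
  rw [intervalIntegral.integral_of_le (by linarith), intervalIntegral.integral_of_le (by linarith),
    integral_Ioc_eq_integral_Ioo, integral_Ioc_eq_integral_Ioo]
  have himg : (fun φ => 2 * Real.arcsin (s * Real.sin φ)) '' (Set.Ioo 0 (π/2))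
      = Set.Ioo 0 (2 * Real.arcsin s) := by
    ext β
    simp only [Set.mem_image, Set.mem_Ioo]
    constructor
    · rintro ⟨φ, ⟨h1, h2⟩, rfl⟩
      have hsin : 0 < Real.sin φ := Real.sin_pos_of_pos_of_lt_pi h1 (by linarith)
      have hsin1 : Real.sin φ < 1 := by
        have := Real.sin_lt_sin_of_lt_of_le_pi_div_two (by linarith : -(π/2) ≤ φ) le_rfl h2
        rwa [Real.sin_pi_div_two] at this
      have a1 : 0 < Real.arcsin (s * Real.sin φ) := Real.arcsin_pos.mpr (by positivity)
      have a2 : Real.arcsin (s * Real.sin φ) < Real.arcsin s :=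
        Real.arcsin_lt_arcsin (by nlinarith) (by nlinarith) hs1.le
      constructor <;> linarith
    · rintro ⟨h1, h2⟩
      have b1 : 0 < Real.sin (β/2) := Real.sin_pos_of_pos_of_lt_pi (by linarith)
        (by linarith [Real.arcsin_le_pi_div_two s])
      have b2 : Real.sin (β/2) < s := by
        have := Real.sin_lt_sin_of_lt_of_le_pi_div_two (by linarith : -(π/2) ≤ β/2)
          (Real.arcsin_le_pi_div_two s) (by linarith : β/2 < Real.arcsin s)
        rwa [Real.sin_arcsin (by linarith) hs1.le] at this
      have b3 : Real.sin (β/2) / s < 1 := (div_lt_one hs0).mpr b2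
      have b4 : 0 < Real.sin (β/2) / s := by positivity
      refine ⟨Real.arcsin (Real.sin (β/2) / s), ⟨Real.arcsin_pos.mpr b4, Real.arcsin_lt_pi_div_two.mpr b3⟩, ?_⟩
      rw [Real.sin_arcsin (by linarith) b3.le]
      have : s * (Real.sin (β/2) / s) = Real.sin (β/2) := by field_simp
      rw [this, Real.arcsin_sin (by linarith) (by linarith [Real.arcsin_le_pi_div_two s])]
      ring
  rw [← himg]
  have hinj : Set.InjOn (fun φ => 2 * Real.arcsin (s * Real.sin φ)) (Set.Ioo 0 (π/2)) := by
    intro a ha b hb hab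
    simp only at hab
    have h1 : Real.arcsin (s * Real.sin a) = Real.arcsin (s * Real.sin b) := by linarith
    have ia := lg_ssin hs0 hs1 a
    have ib := lg_ssin hs0 hs1 b
    have h2 := Real.injOn_arcsin ⟨ia.1.le, ia.2.le⟩ ⟨ib.1.le, ib.2.le⟩ h1
    have h3 : Real.sin a = Real.sin b := mul_left_cancel₀ hs0.ne' h2
    exact Real.injOn_sin ⟨by linarith [ha.1], ha.2.le⟩ ⟨by linarith [hb.1], hb.2.le⟩ h3
  rw [integral_image_eq_integral_abs_deriv_smul measurableSet_Ioo
    (f' := fun φ => 2 * (1 / Real.sqrt (1 - (s * Real.sin φ)^2) * (s * Real.cos φ))) ?_ hinj]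
  · refine setIntegral_congr_fun measurableSet_Ioo fun φ hφ => ?_
    have hc : 0 < Real.cos φ := Real.cos_pos_of_mem_Ioo ⟨by linarith [hφ.1], hφ.2⟩
    have iu := lg_ssin hs0 hs1 φ
    have hu : 0 < 1 - (s * Real.sin φ)^2 := by nlinarith [iu.1, iu.2]
    have hr := Real.sqrt_pos.mpr hu
    have e1 : Real.sqrt (2 * (Real.cos (2 * Real.arcsin (s * Real.sin φ)) - x)) = 2 * s * Real.cos φ := by
      rw [Real.cos_two_mul', Real.sin_arcsin iu.1.le iu.2.le, Real.cos_arcsin, Real.sq_sqrt hu.le]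
      rw [show 2 * (1 - (s * Real.sin φ)^2 - (s * Real.sin φ)^2 - x) = (2 * s * Real.cos φ)^2 by
        have := Real.sin_sq_add_cos_sq φ
        have hx' : x = 1 - 2*s^2 := by linarith
        rw [hx', mul_pow, mul_pow, Real.cos_sq' φ]; ring]
      exact Real.sqrt_sq (by positivity)
    rw [e1, abs_of_pos (by positivity), lgK, Complex.real_smul]
    have e2 : (2*ν+1) * ((2 * Real.arcsin (s * Real.sin φ) : ℝ) : ℂ) / 2
      = (2*ν+1) * ((Real.arcsin (s * Real.sin φ) : ℝ) : ℂ) := by push_cast; ring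
    rw [e2]
    have n1 : (s:ℂ) ≠ 0 := by exact_mod_cast hs0.ne'
    have n2 : ((Real.cos φ : ℝ):ℂ) ≠ 0 := by exact_mod_cast hc.ne'
    have n3 : ((Real.sqrt (1 - (s * Real.sin φ)^2) : ℝ):ℂ) ≠ 0 := by exact_mod_cast hr.ne'
    rw [Complex.ofReal_mul, Complex.ofReal_mul, Complex.ofReal_mul, Complex.ofReal_mul, Complex.ofReal_mul,
      Complex.ofReal_div]
    simp only [Complex.ofReal_ofNat, Complex.ofReal_one]
    field_simp
  · intro φ hφ
    have iu := lg_ssin hs0 hs1 φ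
    have d1 : HasDerivAt (fun φ => s * Real.sin φ) (s * Real.cos φ) φ := (Real.hasDerivAt_sin φ).const_mul s
    have d2 := (Real.hasDerivAt_arcsin iu.1.ne' iu.2.ne).comp φ d1
    exact (d2.const_mul 2).hasDerivWithinAt

lemma lg_wallis (k : ℕ) : ∫ φ in (0:ℝ)..(π/2), Real.sin φ ^ (2*k) = π/2 * lgW k := by
  induction k with
  | zero => simp [lgW]
  | succ k ih =>
    rw [show 2*(k+1) = 2*k+2 by ring, integral_sin_pow, ih, lgW]
    simp
    ring

lemma lg_series (ν : ℂ) {x : ℝ} (hx : x ∈ Set.Ioo (-1:ℝ) 1) :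
    legendreP ν x = lgPs (lgA ν) ((1-x)/2) := by
  rw [lg_mehler ν hx]
  have h0 : 0 < (1-x)/2 := by linarith [hx.2]
  have hsq := Real.sq_sqrt h0.le
  set s := Real.sqrt ((1-x)/2)
  have hs0 : 0 < s := Real.sqrt_pos.mpr h0
  have hs1 : s < 1 := by nlinarith [hx.1]
  have hs2 : s^2 < 1 := by nlinarith
  obtain ⟨C, hC⟩ := lgD_bound ν
  have key : HasSum (fun k : ℕ => ∫ φ in (0:ℝ)..(π/2), lgD ν k * (((s * Real.sin φ)^2 : ℝ):ℂ)^k)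
      (∫ φ in (0:ℝ)..(π/2), lgK ν (s * Real.sin φ)) := by
    refine intervalIntegral.hasSum_integral_of_dominated_convergence (fun k _ => C * (s^2)^k) ?_ ?_ ?_ ?_ ?_
    · intro k
      exact (Continuous.aestronglyMeasurable (by fun_prop))
    · intro k
      refine Filter.Eventually.of_forall fun φ _ => ?_
      rw [norm_mul, norm_pow, Complex.norm_real, Real.norm_eq_abs, abs_of_nonneg (sq_nonneg _)]
      have h1 := hC k
      have h2 : (s * Real.sin φ)^2 ≤ s^2 := by
        rw [mul_pow]; nlinarith [Real.sin_sq_le_one φ, sq_nonneg s]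
      have : 0 ≤ C := (norm_nonneg _).trans h1
      gcongr
    · refine Filter.Eventually.of_forall fun φ _ => ?_
      exact (summable_geometric_of_lt_one (sq_nonneg s) hs2).mul_left C
    · exact intervalIntegrable_const
    · refine Filter.Eventually.of_forall fun φ _ => ?_
      have iu := lg_ssin hs0 hs1 φ
      rw [lgK_eq ν (abs_lt.mpr iu)]
      refine lgPs_hasSum hC ?_
      rw [abs_of_nonneg (sq_nonneg _)]
      nlinarith [iu.1, iu.2]
  have h2 : HasSum (fun k : ℕ => ((2/π : ℝ):ℂ) * ∫ φ in (0:ℝ)..(π/2), lgD ν k * (((s * Real.sin φ)^2 : ℝ):ℂ)^k)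
      (((2/π : ℝ):ℂ) * ∫ φ in (0:ℝ)..(π/2), lgK ν (s * Real.sin φ)) := key.mul_left _
  rw [← h2.tsum_eq, lgPs]
  refine tsum_congr fun k => ?_
  have e : ∀ φ : ℝ, lgD ν k * (((s * Real.sin φ)^2 : ℝ):ℂ)^k
     = (lgD ν k * (((1-x)/2 : ℝ):ℂ)^k) * ((Real.sin φ ^ (2*k) : ℝ):ℂ) := by
    intro φ
    rw [← hsq, mul_pow, Complex.ofReal_mul, mul_pow, Complex.ofReal_pow (Real.sin φ) (2*k), pow_mul,
      Complex.ofReal_pow (Real.sin φ) 2]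
    ring
  simp_rw [e]
  rw [intervalIntegral.integral_const_mul, intervalIntegral.integral_ofReal, lg_wallis, ← lgD_mul]
  have : (π:ℂ) ≠ 0 := by exact_mod_cast Real.pi_ne_zero
  push_cast
  field_simp

/-- coefficients of the antiderivative -/
noncomputable def lgE (ν : ℂ) : ℕ → ℂ := lgShift (fun k => lgA ν k / ((k:ℂ)+1))

/-- `(1-x^2) P_ν'(x)` -/
noncomputable def lgF (ν : ℂ) (x : ℝ) : ℂ := 2 * (ν*(ν+1)) * lgPs (lgE ν) ((1-x)/2)

lemma lgE_bound (ν : ℂ) : ∃ C : ℝ, ∀ k : ℕ, ‖lgE ν k‖ ≤ C := by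
  obtain ⟨C, hC⟩ := lgA_bound' ν
  refine ⟨C, fun k => ?_⟩
  cases k with
  | zero => simpa [lgE, lgShift] using (norm_nonneg _).trans (hC 0)
  | succ k =>
    rw [lgE, lgShift, norm_div, lg_norm_succ]
    exact (div_le_self (norm_nonneg _) (by linarith [(Nat.cast_nonneg k : (0:ℝ) ≤ k)])).trans (hC k)

lemma lg_t_lt {x : ℝ} (hx : x ∈ Set.Ioo (-1:ℝ) 1) : |(1-x)/2| < 1 := by
  rw [abs_lt]; constructor <;> linarith [hx.1, hx.2]

lemma lgE_deriv (ν : ℂ) : (fun k : ℕ => ((k:ℂ)+1) * lgE ν (k+1)) = lgA ν := by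
  ext k
  have := lg_succ_ne k
  simp only [lgE, lgShift]; field_simp

/-- `t(1-t) f_t = -N e(t)` -/
lemma lg_rel (ν : ℂ) {t : ℝ} (ht : |t| < 1) :
    (t:ℂ) * (1 - t) * lgPs (fun k => ((k:ℂ)+1) * lgA ν (k+1)) t = -(ν*(ν+1)) * lgPs (lgE ν) t := by
  obtain ⟨C, hC⟩ := lgA_bound' ν
  obtain ⟨C', hC'⟩ := lgE_bound ν
  have h1 := lgPs_deriv_hasSum hC ht
  have h2 := lgShift_hasSum h1
  have h3 := lgShift_hasSum h2
  have h4 := (h2.sub h3)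
  have h5 := (lgPs_hasSum hC' ht).mul_left (-(ν*(ν+1)))
  have h6 := h4.unique (h5.congr_fun ?_)
  · linear_combination h6
  · intro k
    cases k with
    | zero => simp [lgShift, lgE]
    | succ k =>
      have e := lgA_step ν k
      have e4 : lgShift (lgShift (fun k => ((k:ℂ)+1) * lgA ν (k+1))) (k+1) = k * lgA ν k := by
        cases k with
        | zero => simp [lgShift]
        | succ k => simp [lgShift]
      rw [e4]
      simp only [lgShift, lgE]
      linear_combination (t:ℂ)^(k+1) * e

lemma lg_hasDerivAt (ν : ℂ) {x : ℝ} (hx : x ∈ Set.Ioo (-1:ℝ) 1) :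
    HasDerivAt (legendreP ν) (lgF ν x / (1 - (x:ℂ)^2)) x := by
  obtain ⟨C, hC⟩ := lgA_bound' ν
  have d1 : HasDerivAt (fun x : ℝ => (1-x)/2) (-1/2) x := by
    simpa using ((hasDerivAt_id x).const_sub 1).div_const 2
  have d2 := (lgPs_hasDerivAt hC (lg_t_lt hx)).scomp x d1
  have d3 : HasDerivAt (legendreP ν) _ x := d2.congr_of_eventuallyEq (by
    filter_upwards [isOpen_Ioo.mem_nhds hx] with y hy
    rw [lg_series ν hy]; rfl)
  refine d3.congr_deriv ?_
  have r := lg_rel ν (lg_t_lt hx)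
  rw [lgF, Complex.real_smul]
  have hne : (1 - (x:ℂ)^2) ≠ 0 := by
    have : (1 - x^2) ≠ 0 := by nlinarith [hx.1, hx.2]
    exact_mod_cast this
  rw [eq_div_iff hne]
  push_cast at r ⊢
  linear_combination (-2) * r

lemma lgF_hasDerivAt (ν : ℂ) {x : ℝ} (hx : x ∈ Set.Ioo (-1:ℝ) 1) :
    HasDerivAt (lgF ν) (-(ν*(ν+1)) * legendreP ν x) x := by
  obtain ⟨C, hC⟩ := lgE_bound ν
  have d1 : HasDerivAt (fun x : ℝ => (1-x)/2) (-1/2) x := by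
    simpa using ((hasDerivAt_id x).const_sub 1).div_const 2
  have d2 := (lgPs_hasDerivAt hC (lg_t_lt hx)).scomp x d1
  have d3 : HasDerivAt (lgF ν) _ x := d2.const_mul (2 * (ν*(ν+1)))
  refine d3.congr_deriv ?_
  rw [lgE_deriv, lg_series ν hx, Complex.real_smul]
  push_cast; ring

lemma lgA_raise_aux (ν : ℂ) (k : ℕ) :
    (ν + 1 - k) * lgA (ν+1) k = (ν+1+k) * lgA ν k := by
  induction k with
  | zero => simp [lgA]
  | succ k ih =>
    have := lg_succ_ne k
    rw [lgA, lgA]; push_cast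
    field_simp
    linear_combination (-(ν - k) * (k+ν+2)) * ih

lemma lg_raise (ν : ℂ) (hν : ∀ m : ℤ, ν ≠ (m : ℂ)) {x : ℝ} (hx : x ∈ Set.Ioo (-1:ℝ) 1) :
    (ν+1) * legendreP (ν+1) x = (ν+1) * x * legendreP ν x - lgF ν x := by
  obtain ⟨C, hC⟩ := lgA_bound' ν
  obtain ⟨C1, hC1⟩ := lgA_bound' (ν+1)
  obtain ⟨C', hC'⟩ := lgE_bound ν
  rw [lg_series _ hx, lg_series _ hx, lgF]
  have ht := lg_t_lt hx
  have h1 := (lgPs_hasSum hC1 ht).mul_left (ν+1)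
  have h2 := ((lgPs_hasSum hC ht).sub ((lgShift_hasSum (lgPs_hasSum hC ht)).mul_left 2)).mul_left (ν+1)
  have h3 := h2.sub ((lgPs_hasSum hC' ht).mul_left (2*(ν*(ν+1))))
  have h4 := h1.unique (h3.congr_fun ?_)
  · push_cast at h4 ⊢
    linear_combination h4
  · intro k
    cases k with
    | zero => simp [lgShift, lgE, lgA]
    | succ k =>
      have e := lgA_raise_aux ν k
      have h0 := lg_succ_ne k
      have hk : ν - k ≠ 0 := by
        intro h
        exact hν k (by push_cast; linear_combination h)
      have hk1 : ν + 1 - k ≠ 0 := by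
        intro h
        exact hν (k-1) (by push_cast; linear_combination h)
      have e' : lgA (ν+1) k = (ν+1+k) * lgA ν k / (ν+1-k) := by
        rw [eq_div_iff hk1]; linear_combination e
      simp only [lgShift, lgE]
      rw [lgA, lgA, e']
      field_simp
      ring

lemma lg_raise2 (ν : ℂ) (hν : ∀ m : ℤ, ν ≠ (m : ℂ)) {x : ℝ} (hx : x ∈ Set.Ioo (-1:ℝ) 1) :
    (ν+1) * (ν+2) * legendreP (ν+2) x
      = (ν+1) * ((2*ν+3) * (x:ℂ)^2 - (ν+1)) * legendreP ν x - (2*ν+3) * x * lgF ν x := by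
  have hν1 : ∀ m : ℤ, ν + 1 ≠ (m : ℂ) := by
    intro m h
    exact hν (m-1) (by push_cast; linear_combination h)
  have n1 : ν + 1 ≠ 0 := by simpa using hν1 0
  have r1 := lg_raise ν hν hx
  have r2 := lg_raise (ν+1) hν1 hx
  have hne : (1 - (x:ℂ)^2) ≠ 0 := by
    have : (1 - x^2) ≠ 0 := by nlinarith [hx.1, hx.2]
    exact_mod_cast this
  have dX : HasDerivAt (fun x : ℝ => (x:ℂ)) 1 x := Complex.ofRealCLM.hasDerivAt
  have d1 : HasDerivAt (fun x : ℝ => (ν+1) * legendreP (ν+1) x) _ x := (lg_hasDerivAt (ν+1) hx).const_mul (ν+1)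
  have d2 : HasDerivAt (fun x : ℝ => (ν+1) * (x:ℂ) * legendreP ν x - lgF ν x) _ x :=
    ((dX.const_mul (ν+1)).mul (lg_hasDerivAt ν hx)).sub (lgF_hasDerivAt ν hx)
  have d3 := d1.unique (d2.congr_of_eventuallyEq (by
    filter_upwards [isOpen_Ioo.mem_nhds hx] with y hy
    exact lg_raise ν hν hy))
  have d4 : lgF (ν+1) x = (1-(x:ℂ)^2) * (ν+1) * legendreP ν x + x * lgF ν x := by
    field_simp at d3
    linear_combination d3
  rw [show ν + 2 = ν + 1 + 1 by ring]
  rw [d4] at r2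
  linear_combination (ν+1) * r2 + (ν+2) * x * r1

/-- quartic root -/
noncomputable def lgR (y : ℝ) : ℝ := Real.sqrt (Real.sqrt y)

lemma lgR_pow {y : ℝ} (hy : 0 ≤ y) : lgR y ^ 4 = y := by
  rw [lgR, show (4:ℕ) = 2*2 by norm_num, pow_mul, Real.sq_sqrt (Real.sqrt_nonneg _), Real.sq_sqrt hy]

lemma lgR_pos {y : ℝ} (hy : 0 < y) : 0 < lgR y := Real.sqrt_pos.mpr (Real.sqrt_pos.mpr hy)

lemma lgR_le {y : ℝ} (hy : 0 ≤ y) (h2 : y ≤ 2) : lgR y ≤ 2 := by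
  by_contra h
  push Not at h
  have := lgR_pow hy
  have : (2:ℝ)^4 < lgR y ^ 4 := pow_lt_pow_left₀ h (by norm_num) (by norm_num)
  linarith

lemma lgR_continuous : Continuous lgR := by unfold lgR; fun_prop

lemma lg_bound (ν : ℂ) : ∃ C : ℝ, 0 ≤ C ∧ ∀ x ∈ Set.Ioo (-1:ℝ) 1, ‖legendreP ν x‖ ≤ C / lgR (1+x) := by
  obtain ⟨C, hC⟩ := lgA_bound ν
  obtain ⟨C', hC'⟩ := lgA_bound' ν
  have hC0 : 0 ≤ C := le_trans (by positivity) (hC 0)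
  refine ⟨2 + 4*C, by positivity, fun x hx => ?_⟩
  have hz : 0 < 1 + x := by linarith [hx.1]
  have hZ := lgR_pos hz
  have hZ4 := lgR_pow hz.le
  have hZ2 := lgR_le hz.le (by linarith [hx.2])
  set Z := lgR (1+x)
  have ht := lg_t_lt hx
  have ht0 : 0 ≤ (1-x)/2 := by linarith [hx.2]
  rw [lg_series ν hx]
  set t := (1-x)/2 with htdef
  have hs := lgPs_summable hC' ht
  rw [lgPs, hs.tsum_eq_zero_add]
  have hlog := Real.hasSum_pow_div_log_of_abs_lt_one ht
  have hb : ‖∑' k : ℕ, lgA ν (k+1) * (t:ℂ)^(k+1)‖ ≤ C * (-Real.log (1-t)) := by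
    refine tsum_of_norm_bounded (hlog.mul_left C) fun k => ?_
    rw [norm_mul, norm_pow, Complex.norm_real, Real.norm_eq_abs, abs_of_nonneg ht0]
    have := hC k
    have hk : (0:ℝ) < (k:ℝ)+1 := by positivity
    have h1 : ‖lgA ν (k+1)‖ ≤ C / ((k:ℝ)+1) := by rw [le_div_iff₀ hk]; linarith
    calc _ ≤ C / ((k:ℝ)+1) * t^(k+1) := by gcongr
      _ = _ := by ring
  have hlog2 : -Real.log (1-t) ≤ 4 / Z := by
    have e : 1 - t = Z^4/2 := by rw [hZ4, htdef]; ring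
    rw [e, Real.log_div (by positivity) two_ne_zero, Real.log_pow]
    have l1 := Real.log_le_sub_one_of_pos (inv_pos.mpr hZ)
    rw [Real.log_inv] at l1
    have l2 : Real.log 2 ≤ 2 - 1 := Real.log_le_sub_one_of_pos two_pos
    have : 4 / Z = 4 * Z⁻¹ := by ring
    push_cast
    linarith
  have h1 : (1:ℝ) ≤ 2 / Z := by rw [le_div_iff₀ hZ]; linarith
  calc _ ≤ ‖lgA ν 0 * (t:ℂ)^0‖ + ‖∑' k : ℕ, lgA ν (k+1) * (t:ℂ)^(k+1)‖ := norm_add_le _ _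
    _ ≤ 1 + C * (4/Z) := by
      gcongr
      · simp [lgA]
      · exact hb.trans (by gcongr)
    _ ≤ 2/Z + C * (4/Z) := by gcongr
    _ = _ := by ring

lemma lgF_bound (ν : ℂ) : ∃ C : ℝ, 0 ≤ C ∧ ∀ x ∈ Set.Ioo (-1:ℝ) 1, ‖lgF ν x‖ ≤ C * (1-x) := by
  obtain ⟨C, hC⟩ := lgA_bound ν
  have hC0 : 0 ≤ C := le_trans (by positivity) (hC 0)
  refine ⟨C, hC0, fun x hx => ?_⟩
  have ht := lg_t_lt hx
  have r := lg_rel ν ht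
  have ht0 : 0 ≤ (1-x)/2 := by linarith [hx.2]
  have ht1 : 0 < 1 - (1-x)/2 := by linarith [hx.1]
  rw [lgF]
  set t := (1-x)/2 with htdef
  have e : 2 * (ν*(ν+1)) * lgPs (lgE ν) t = -2 * ((t:ℂ) * (1 - t) * lgPs (fun k => ((k:ℂ)+1) * lgA ν (k+1)) t) := by
    rw [r]; ring
  rw [e]
  have hb : ‖lgPs (fun k => ((k:ℂ)+1) * lgA ν (k+1)) t‖ ≤ C * (1-t)⁻¹ := by
    refine tsum_of_norm_bounded ((hasSum_geometric_of_lt_one ht0 (by linarith)).mul_left C) fun k => ?_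
    rw [norm_mul, norm_mul, norm_pow, Complex.norm_real, Real.norm_eq_abs, abs_of_nonneg ht0, lg_norm_succ]
    have := hC k
    gcongr
  have e2 : ‖(1:ℂ) - t‖ = 1 - t := by
    have : (1:ℂ) - t = ((1 - t : ℝ):ℂ) := by push_cast; rfl
    rw [this, Complex.norm_real, Real.norm_eq_abs, abs_of_pos ht1]
  rw [norm_mul, norm_mul, norm_mul, e2, Complex.norm_real, Real.norm_eq_abs, abs_of_nonneg ht0]
  have : ‖(-2:ℂ)‖ = 2 := by simp
  rw [this]
  calc 2 * (t * (1-t) * _) ≤ 2 * (t * (1-t) * (C * (1-t)⁻¹)) := by gcongr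
    _ = C * (1-x) * ((1-t) * (1-t)⁻¹) := by rw [show 1 - x = 2*t by rw [htdef]; ring]; ring
    _ = C * (1-x) := by rw [mul_inv_cancel₀ ht1.ne', mul_one]

/-- the integral -/
noncomputable def lgB (ν : ℂ) : ℂ := ∫ x in (-1:ℝ)..1, (legendreP ν x)^2 * legendreP ν (-x)

lemma lg_neg_mem {x : ℝ} (hx : x ∈ Set.Ioo (-1:ℝ) 1) : -x ∈ Set.Ioo (-1:ℝ) 1 :=
  ⟨by linarith [hx.2], by linarith [hx.1]⟩

lemma lg_continuousOn (ν : ℂ) : ContinuousOn (legendreP ν) (Set.Ioo (-1:ℝ) 1) :=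
  fun _ hx => (lg_hasDerivAt ν hx).continuousAt.continuousWithinAt

lemma lg_f2g_continuousOn (ν : ℂ) :
    ContinuousOn (fun x => (legendreP ν x)^2 * legendreP ν (-x)) (Set.Ioo (-1:ℝ) 1) :=
  ((lg_continuousOn ν).pow 2).mul
    ((lg_continuousOn ν).comp continuous_neg.continuousOn fun _ hx => lg_neg_mem hx)

lemma lg_dom_integrable : IntegrableOn (fun x : ℝ => 1 / (lgR (1+x) ^2 * lgR (1-x))) (Set.Ioo (-1:ℝ) 1) := by
  have h1 : IntervalIntegrable (fun x : ℝ => (1 + x) ^ (-(1/2):ℝ)) volume (-1) 1 := by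
    have := (intervalIntegral.intervalIntegrable_rpow' (a := 0) (b := 2) (r := -(1/2)) (by norm_num)).comp_add_left 1
    norm_num at this ⊢
    exact this
  have h2 : IntervalIntegrable (fun x : ℝ => (1 - x) ^ (-(1/2):ℝ)) volume (-1) 1 := by
    have := (intervalIntegral.intervalIntegrable_rpow' (a := 0) (b := 2) (r := -(1/2)) (by norm_num)).comp_sub_left 1
    norm_num at this ⊢
    exact this.symm
  have h3 := (h1.add (h2.const_mul 2))
  rw [intervalIntegrable_iff_integrableOn_Ioo_of_le (by norm_num)] at h3
  refine Integrable.mono' h3 ?_ ?_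
  · apply ContinuousOn.aestronglyMeasurable _ measurableSet_Ioo
    have := lgR_continuous
    apply ContinuousOn.div (by fun_prop) (by fun_prop)
    intro x hx
    have := lgR_pos (show 0 < 1 + x by linarith [hx.1])
    have := lgR_pos (show 0 < 1 - x by linarith [hx.2])
    positivity
  · refine (ae_restrict_iff' measurableSet_Ioo).2 (ae_of_all _ fun x hx => ?_)
    have hz : 0 < 1 + x := by linarith [hx.1]
    have hy : 0 < 1 - x := by linarith [hx.2]
    have e : ∀ y : ℝ, 0 < y → y ^ (-(1/2):ℝ) = 1/ lgR y ^ 2 := by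
      intro y hy
      rw [Real.rpow_neg hy.le, ← Real.sqrt_eq_rpow, lgR, Real.sq_sqrt (Real.sqrt_nonneg _), one_div]
    rw [e _ hz, e _ hy]
    have hZ := lgR_pos hz
    have hY := lgR_pos hy
    have hZ2 := lgR_pow hz.le
    have hY2 := lgR_pow hy.le
    have hY3 := lgR_le hy.le (by linarith [hx.1])
    set Z := lgR (1+x)
    set Y := lgR (1-x)
    rw [Real.norm_eq_abs, abs_of_pos (by positivity), ← sub_nonneg]
    have : 1 / Z^2 + 2 * (1/Y^2) - 1 / (Z^2*Y) = (Y^2 + 2 * Z^2 - Y)/(Z^2*Y^2) := by field_simp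
    rw [this]
    apply div_nonneg _ (by positivity)
    by_cases hY1 : 1 ≤ Y
    · nlinarith
    · push Not at hY1
      have : Y^4 ≤ 1 := pow_le_one₀ hY.le hY1.le
      have : 1 ≤ Z := by
        by_contra h; push Not at h
        have : Z^4 < 1 := pow_lt_one₀ hZ.le h (by norm_num)
        linarith
      nlinarith

lemma lg_f2g_bound (ν : ℂ) : ∃ C : ℝ, ∀ x ∈ Set.Ioo (-1:ℝ) 1,
    ‖(legendreP ν x)^2 * legendreP ν (-x)‖ ≤ C * (1 / (lgR (1+x) ^2 * lgR (1-x))) := by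
  obtain ⟨C, hC0, hC⟩ := lg_bound ν
  refine ⟨C^3, fun x hx => ?_⟩
  have h1 := hC x hx
  have h2 := hC (-x) (lg_neg_mem hx)
  rw [← sub_eq_add_neg] at h2
  rw [norm_mul, norm_pow]
  have hZ := lgR_pos (show 0 < 1 + x by linarith [hx.1])
  have hY := lgR_pos (show 0 < 1 - x by linarith [hx.2])
  calc _ ≤ (C / lgR (1+x))^2 * (C / lgR (1-x)) := by gcongr
    _ = _ := by field_simp

lemma lg_f2g_integrable (ν : ℂ) :
    IntervalIntegrable (fun x => (legendreP ν x)^2 * legendreP ν (-x)) volume (-1:ℝ) 1 := by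
  obtain ⟨C, hC⟩ := lg_f2g_bound ν
  rw [intervalIntegrable_iff_integrableOn_Ioo_of_le (by norm_num)]
  refine Integrable.mono' (lg_dom_integrable.const_mul C)
    ((lg_f2g_continuousOn ν).aestronglyMeasurable measurableSet_Ioo) ?_
  exact (ae_restrict_iff' measurableSet_Ioo).2 (ae_of_all _ hC)

/-- polynomial coefficients of the telescoping certificate -/
noncomputable def lgq0 (n X : ℂ) : ℂ := (n+1)^3*((-51-163*n-191*n^2-97*n^3-18*n^4)*X+(54+198*n+246*n^2+128*n^3+24*n^4)*X^3+(-135-351*n-342*n^2-148*n^3-24*n^4)*X^5)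
noncomputable def lgq1 (n X : ℂ) : ℂ := (n+1)^3*(54+117*n+81*n^2+18*n^3)+(n+1)^2*((-27-198*n-309*n^2-180*n^3-36*n^4)*X^2+(405+1053*n+1026*n^2+444*n^3+72*n^4)*X^4)
noncomputable def lgq2 (n X : ℂ) : ℂ := (n+1)*((-108-198*n-120*n^2-24*n^3)*X+(-405-1053*n-1026*n^2-444*n^3-72*n^4)*X^3)
noncomputable def lgp3 (n X : ℂ) : ℂ := (84+206*n+190*n^2+78*n^3+12*n^4)+(n+1)*(54+99*n+60*n^2+12*n^3)*X^2+(-135-351*n-342*n^2-148*n^3-24*n^4)*X^4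

noncomputable def lgCert (ν : ℂ) (x : ℝ) : ℂ :=
  (1-(x:ℂ)^2) * lgq0 ν x * ((legendreP ν x)^2 * legendreP ν (-x))
  + (1-(x:ℂ)^2) * lgq1 ν x * ((2 * legendreP ν x * legendreP ν (-x) * lgF ν x + (legendreP ν x)^2 * (-lgF ν (-x)))/3)
  + (1-(x:ℂ)^2) * lgq2 ν x * ((2 * legendreP ν x * lgF ν x * (-lgF ν (-x)) + legendreP ν (-x) * (lgF ν x)^2)/3)
  + lgp3 ν x * ((lgF ν x)^2 * (-lgF ν (-x)))

set_option maxHeartbeats 1600000 in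
lemma lgCert_hasDerivAt (n : ℂ) (hν : ∀ m : ℤ, n ≠ (m : ℂ)) {x : ℝ} (hx : x ∈ Set.Ioo (-1:ℝ) 1) :
    HasDerivAt (lgCert n)
      ((3*n+5)*(3*n+7)*(n+1)^3*(n+2)^3 * ((legendreP (n+2) x)^2 * legendreP (n+2) (-x))
        - (n+1)^5*(n+2)*(3*n+2)*(3*n+4) * ((legendreP n x)^2 * legendreP n (-x))) x := by
  have hy := lg_neg_mem hx
  have r1 := lg_raise2 n hν hx
  have r2 := lg_raise2 n hν hy
  have hne : (1 - (x:ℂ)^2) ≠ 0 := by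
    have : (1 - x^2) ≠ 0 := by nlinarith [hx.1, hx.2]
    exact_mod_cast this
  have dX : HasDerivAt (fun x : ℝ => (x:ℂ)) 1 x := Complex.ofRealCLM.hasDerivAt
  have dn : HasDerivAt (fun x : ℝ => -x) (-1) x := hasDerivAt_neg x
  have df := lg_hasDerivAt n hx
  have dF := lgF_hasDerivAt n hx
  have dg := (lg_hasDerivAt n hy).scomp x dn
  have dG := (lgF_hasDerivAt n hy).scomp x dn
  have e1 : legendreP n ∘ (fun x : ℝ => -x) = fun x => legendreP n (-x) := rfl
  have e2 : lgF n ∘ (fun x : ℝ => -x) = fun x => lgF n (-x) := rfl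
  rw [e1] at dg
  rw [e2] at dG
  replace dG := dG.neg
  have dX2 := (dX.fun_pow 2)
  have dX3 := (dX.fun_pow 3)
  have dX4 := (dX.fun_pow 4)
  have dX5 := (dX.fun_pow 5)
  have du := dX2.const_sub 1
  have dq0 : HasDerivAt (fun x : ℝ => lgq0 n x) _ x :=
    (((dX.const_mul (-51-163*n-191*n^2-97*n^3-18*n^4)).fun_add (dX3.const_mul (54+198*n+246*n^2+128*n^3+24*n^4))).fun_add
      (dX5.const_mul (-135-351*n-342*n^2-148*n^3-24*n^4))).const_mul ((n+1)^3)
  have dq1 : HasDerivAt (fun x : ℝ => lgq1 n x) _ x :=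
    (((dX2.const_mul (-27-198*n-309*n^2-180*n^3-36*n^4)).fun_add (dX4.const_mul (405+1053*n+1026*n^2+444*n^3+72*n^4))).const_mul ((n+1)^2)).const_add ((n+1)^3*(54+117*n+81*n^2+18*n^3))
  have dq2 : HasDerivAt (fun x : ℝ => lgq2 n x) _ x :=
    ((dX.const_mul (-108-198*n-120*n^2-24*n^3)).fun_add (dX3.const_mul (-405-1053*n-1026*n^2-444*n^3-72*n^4))).const_mul (n+1)
  have dp3 : HasDerivAt (fun x : ℝ => lgp3 n x) _ x :=
    ((dX2.const_mul ((n+1)*(54+99*n+60*n^2+12*n^3))).const_add (84+206*n+190*n^2+78*n^3+12*n^4)).fun_add (dX4.const_mul (-135-351*n-342*n^2-148*n^3-24*n^4))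
  have T1 := (du.fun_mul dq0).fun_mul ((df.fun_pow 2).fun_mul dg)
  have T2 := (du.fun_mul dq1).fun_mul (((((df.const_mul 2).fun_mul dg).fun_mul dF).fun_add ((df.fun_pow 2).fun_mul dG)).div_const 3)
  have T3 := (du.fun_mul dq2).fun_mul (((((df.const_mul 2).fun_mul dF).fun_mul dG).fun_add (dg.fun_mul (dF.fun_pow 2))).div_const 3)
  have T4 := dp3.fun_mul ((dF.fun_pow 2).fun_mul dG)
  have T : HasDerivAt (lgCert n) _ x := ((T1.fun_add T2).fun_add T3).fun_add T4
  refine T.congr_deriv ?_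
  have ec : (3*n+5)*(3*n+7)*(n+1)^3*(n+2)^3 * ((legendreP (n+2) x)^2 * legendreP (n+2) (-x))
     = (3*n+5)*(3*n+7) * (((n+1)*(n+2)*legendreP (n+2) x)^2 * ((n+1)*(n+2)*legendreP (n+2) (-x))) := by ring
  rw [ec, r1, r2]
  simp only [Pi.neg_apply]
  push_cast
  simp only [neg_smul, one_smul, div_eq_mul_inv, neg_sq]
  have hi := mul_inv_cancel₀ hne
  generalize (1 - (x:ℂ)^2)⁻¹ = i at *
  generalize legendreP n x = f at *
  generalize legendreP n (-x) = g at *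
  generalize lgF n x = F at *
  generalize lgF n (-x) = G at *
  generalize (x:ℂ) = X at *
  simp only [lgq0, lgq1, lgq2, lgp3]
  linear_combination (exp := 1) hi * (((n+1)^3*((-51-163*n-191*n^2-97*n^3-18*n^4)*X+(54+198*n+246*n^2+128*n^3+24*n^4)*X^3+(-135-351*n-342*n^2-148*n^3-24*n^4)*X^5)) * (2*f*F*g - f^2*G) + ((n+1)^3*(54+117*n+81*n^2+18*n^3)+(n+1)^2*((-27-198*n-309*n^2-180*n^3-36*n^4)*X^2+(405+1053*n+1026*n^2+444*n^3+72*n^4)*X^4)) * (2*F*g*F - 2*f*G*F - 2*f*F*G)/3 + ((n+1)*((-108-198*n-120*n^2-24*n^3)*X+(-405-1053*n-1026*n^2-444*n^3-72*n^4)*X^3)) * (-3*F^2*G)/3)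

set_option maxHeartbeats 1600000 in
lemma lgCert_bound (ν : ℂ) : ∃ M : ℝ, ∀ x ∈ Set.Ioo (-1:ℝ) 1,
    ‖lgCert ν x‖ ≤ M * (lgR (1-x) * lgR (1+x)) := by
  obtain ⟨C1, hC10, hC1⟩ := lg_bound ν
  obtain ⟨C2, hC20, hC2⟩ := lgF_bound ν
  have hq : ∃ Q : ℝ, 0 ≤ Q ∧ ∀ x ∈ Set.Ioo (-1:ℝ) 1, ‖lgq0 ν x‖ ≤ Q ∧ ‖lgq1 ν x‖ ≤ Q ∧ ‖lgq2 ν x‖ ≤ Q ∧ ‖lgp3 ν x‖ ≤ Q := by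
    have hc : Continuous fun x : ℝ => ‖lgq0 ν x‖ + ‖lgq1 ν x‖ + ‖lgq2 ν x‖ + ‖lgp3 ν x‖ := by
      unfold lgq0 lgq1 lgq2 lgp3
      fun_prop
    obtain ⟨Q, hQ⟩ := (isCompact_Icc (a := (-1:ℝ)) (b := 1)).bddAbove_image hc.continuousOn
    have hQ' : ∀ x ∈ Set.Icc (-1:ℝ) 1, ‖lgq0 ν x‖ + ‖lgq1 ν x‖ + ‖lgq2 ν x‖ + ‖lgp3 ν x‖ ≤ Q :=
      fun x hx => hQ ⟨x, hx, rfl⟩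
    refine ⟨Q, le_trans (by positivity) (hQ' 0 (by norm_num)), fun x hx => ?_⟩
    have := hQ' x ⟨hx.1.le, hx.2.le⟩
    have h0 := norm_nonneg (lgq0 ν x)
    have h1 := norm_nonneg (lgq1 ν x)
    have h2 := norm_nonneg (lgq2 ν x)
    have h3 := norm_nonneg (lgp3 ν x)
    refine ⟨?_, ?_, ?_, ?_⟩ <;> linarith
  obtain ⟨Q, hQ0, hQ⟩ := hq
  set C := C1 + C2 with hCdef
  have hC0 : 0 ≤ C := by positivity
  refine ⟨10^7 * Q * C^3, fun x hx => ?_⟩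
  obtain ⟨h0, h1, h2, h3⟩ := hQ x hx
  have hz : 0 < 1 + x := by linarith [hx.1]
  have hy : 0 < 1 - x := by linarith [hx.2]
  have hZ := lgR_pos hz
  have hY := lgR_pos hy
  have hZ2 := lgR_pow hz.le
  have hY2 := lgR_pow hy.le
  have hY3 := lgR_le hy.le (by linarith [hx.1])
  have hZ3 := lgR_le hz.le (by linarith [hx.2])
  have hf : ‖legendreP ν x‖ * lgR (1+x) ≤ C := by
    have := hC1 x hx
    rw [le_div_iff₀ hZ] at this
    linarith
  have hg : ‖legendreP ν (-x)‖ * lgR (1-x) ≤ C := by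
    have := hC1 (-x) (lg_neg_mem hx)
    rw [← sub_eq_add_neg, le_div_iff₀ hY] at this
    linarith
  have hF : ‖lgF ν x‖ ≤ C * lgR (1-x)^4 := by
    rw [hY2]
    exact (hC2 x hx).trans (by gcongr; linarith)
  have hG : ‖lgF ν (-x)‖ ≤ C * lgR (1+x)^4 := by
    rw [hZ2]
    have := hC2 (-x) (lg_neg_mem hx)
    rw [sub_neg_eq_add] at this
    exact this.trans (by gcongr; linarith)
  have hu : ‖1 - (x:ℂ)^2‖ = lgR (1-x)^4 * lgR (1+x)^4 := by
    rw [hZ2, hY2]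
    have : 1 - (x:ℂ)^2 = (((1-x)*(1+x) : ℝ):ℂ) := by push_cast; ring
    rw [this, Complex.norm_real, Real.norm_eq_abs, abs_of_pos (by positivity)]
  have t3 : ‖(3:ℂ)‖ = 3 := by simp
  have t2 : ‖(2:ℂ)‖ = 2 := by simp
  have n1 : ‖lgCert ν x‖ ≤ ‖1 - (x:ℂ)^2‖ * Q * (‖legendreP ν x‖^2 * ‖legendreP ν (-x)‖)
      + ‖1 - (x:ℂ)^2‖ * Q * ((2 * ‖legendreP ν x‖ * ‖legendreP ν (-x)‖ * ‖lgF ν x‖ + ‖legendreP ν x‖^2 * ‖lgF ν (-x)‖)/3)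
      + ‖1 - (x:ℂ)^2‖ * Q * ((2 * ‖legendreP ν x‖ * ‖lgF ν x‖ * ‖lgF ν (-x)‖ + ‖legendreP ν (-x)‖ * ‖lgF ν x‖^2)/3)
      + Q * (‖lgF ν x‖^2 * ‖lgF ν (-x)‖) := by
    rw [lgCert]
    refine (norm_add_le _ _).trans (add_le_add ((norm_add_le _ _).trans (add_le_add ((norm_add_le _ _).trans (add_le_add ?_ ?_)) ?_)) ?_)
    · rw [norm_mul, norm_mul, norm_mul, norm_pow]; gcongr
    · rw [norm_mul, norm_mul, norm_div, t3]
      gcongr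
      refine (norm_add_le _ _).trans (le_of_eq ?_)
      simp only [norm_mul, norm_pow, norm_neg, t2]
    · rw [norm_mul, norm_mul, norm_div, t3]
      gcongr
      refine (norm_add_le _ _).trans (le_of_eq ?_)
      simp only [norm_mul, norm_pow, norm_neg, t2]
    · rw [norm_mul, norm_mul, norm_pow, norm_neg]; gcongr
  refine n1.trans ?_
  rw [hu]
  have p1 := norm_nonneg (legendreP ν x)
  have p2 := norm_nonneg (legendreP ν (-x))
  have p3 := norm_nonneg (lgF ν x)
  have p4 := norm_nonneg (lgF ν (-x))
  generalize ‖legendreP ν x‖ = f at *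
  generalize ‖legendreP ν (-x)‖ = g at *
  generalize ‖lgF ν x‖ = F at *
  generalize ‖lgF ν (-x)‖ = G at *
  generalize lgR (1-x) = Y at *
  generalize lgR (1+x) = Z at *
  have pY : ∀ k : ℕ, Y^k ≤ 2^k := fun k => pow_le_pow_left₀ hY.le hY3 k
  have pZ : ∀ k : ℕ, Z^k ≤ 2^k := fun k => pow_le_pow_left₀ hZ.le hZ3 k
  have key : ∀ (a b : ℕ), Q * C^3 * (Y^(a+1) * Z^(b+1)) ≤ Q * C^3 * (Y*Z) * (2^a*2^b) := by
    intro a b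
    have := mul_le_mul (pY a) (pZ b) (by positivity) (by positivity)
    calc Q * C^3 * (Y^(a+1) * Z^(b+1)) = Q * C^3 * (Y*Z) * (Y^a*Z^b) := by ring
      _ ≤ _ := by gcongr
  have s1 : Y^4*Z^4*Q*(f^2*g) ≤ Q * C^3 * (Y^(2+1) * Z^(1+1)) := by
    calc Y^4*Z^4*Q*(f^2*g) = Q * ((f*Z)^2*(g*Y)) * (Y^3*Z^2) := by ring
      _ ≤ Q * (C^2*C) * (Y^3*Z^2) := by gcongr
      _ = _ := by ring
  have s2 : Y^4*Z^4*Q*((2*f*g*F+f^2*G)/3) ≤ Q * C^3 * (Y^(6+1) * Z^(2+1)) + Q * C^3 * (Y^(3+1) * Z^(5+1)) := by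
    calc Y^4*Z^4*Q*((2*f*g*F+f^2*G)/3) ≤ Y^4*Z^4*Q*(f*g*F+f^2*G) := by
          have : 0 ≤ f*g*F := by positivity
          have : 0 ≤ f^2*G := by positivity
          gcongr; linarith
      _ = Q * ((f*Z)*(g*Y)*F) * (Y^3*Z^3) + Q * ((f*Z)^2*G) * (Y^4*Z^2) := by ring
      _ ≤ Q * (C*C*(C*Y^4)) * (Y^3*Z^3) + Q * (C^2*(C*Z^4)) * (Y^4*Z^2) := by gcongr
      _ = _ := by ring
  have s3 : Y^4*Z^4*Q*((2*f*F*G+g*F^2)/3) ≤ Q * C^3 * (Y^(7+1) * Z^(6+1)) + Q * C^3 * (Y^(10+1) * Z^(3+1)) := by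
    calc Y^4*Z^4*Q*((2*f*F*G+g*F^2)/3) ≤ Y^4*Z^4*Q*(f*F*G+g*F^2) := by
          have : 0 ≤ f*F*G := by positivity
          have : 0 ≤ g*F^2 := by positivity
          gcongr; linarith
      _ = Q * ((f*Z)*F*G) * (Y^4*Z^3) + Q * ((g*Y)*F^2) * (Y^3*Z^4) := by ring
      _ ≤ Q * (C*(C*Y^4)*(C*Z^4)) * (Y^4*Z^3) + Q * (C*(C*Y^4)^2) * (Y^3*Z^4) := by gcongr
      _ = _ := by ring
  have s4 : Q*(F^2*G) ≤ Q * C^3 * (Y^(7+1) * Z^(3+1)) := by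
    calc Q*(F^2*G) ≤ Q * ((C*Y^4)^2*(C*Z^4)) := by gcongr
      _ = _ := by ring
  have k1 := key 2 1
  have k2 := key 6 2
  have k3 := key 3 5
  have k4 := key 7 6
  have k5 := key 10 3
  have k6 := key 7 3
  have pos : 0 ≤ Q * C^3 * (Y*Z) := by positivity
  norm_num at k1 k2 k3 k4 k5 k6 s1 s2 s3 s4
  nlinarith

lemma lgB_rec (n : ℂ) (hν : ∀ m : ℤ, n ≠ (m : ℂ)) :
    (n+2)^2*(3*n+5)*(3*n+7) * lgB (n+2) = (n+1)^2*(3*n+2)*(3*n+4) * lgB n := by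
  obtain ⟨M, hM⟩ := lgCert_bound n
  have hlim : ∀ a : ℝ, (lgR (1-a) * lgR (1+a) = 0) → Filter.Tendsto (lgCert n) (nhdsWithin a (Set.Ioo (-1) 1)) (nhds 0) := by
    intro a ha
    have hc : Continuous fun x => M * (lgR (1-x) * lgR (1+x)) := by
      have := lgR_continuous
      fun_prop
    have := hc.tendsto a
    simp only [ha, mul_zero] at this
    refine squeeze_zero_norm' ?_ (this.mono_left nhdsWithin_le_nhds)
    filter_upwards [self_mem_nhdsWithin] with x hx using hM x hx
  have l1 := hlim (-1) (by norm_num [lgR])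
  have l2 := hlim 1 (by norm_num [lgR])
  rw [nhdsWithin_Ioo_eq_nhdsGT (by norm_num)] at l1
  rw [nhdsWithin_Ioo_eq_nhdsLT (by norm_num)] at l2
  have i1 := (lg_f2g_integrable (n+2)).const_mul ((3*n+5)*(3*n+7)*(n+1)^3*(n+2)^3)
  have i2 := (lg_f2g_integrable n).const_mul ((n+1)^5*(n+2)*(3*n+2)*(3*n+4))
  have := integral_eq_sub_of_hasDerivAt_of_tendsto (by norm_num) (fun x hx => lgCert_hasDerivAt n hν hx) (i1.sub i2) l1 l2
  rw [intervalIntegral.integral_sub i1 i2, intervalIntegral.integral_const_mul, intervalIntegral.integral_const_mul] at this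
  change _ * lgB (n+2) - _ * lgB n = _ at this
  have n1 : n + 1 ≠ 0 := by
    have := hν (-1); push_cast at this; exact fun h => this (by linear_combination h)
  have n2 : n + 2 ≠ 0 := by
    have := hν (-2); push_cast at this; exact fun h => this (by linear_combination h)
  apply mul_left_cancel₀ (mul_ne_zero (pow_ne_zero 3 n1) n2)
  linear_combination this

lemma lg_int_differentiable {α : Type*} [MeasurableSpace α] (μ : Measure α) (F : ℂ → α → ℂ)
    (hm : ∀ z, AEStronglyMeasurable (F z) μ)
    (hd : ∀ᵐ a ∂μ, Differentiable ℂ (fun z => F z a))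
    (hb : ∀ R : ℝ, ∃ g : α → ℝ, Integrable g μ ∧ ∀ᵐ a ∂μ, ∀ z : ℂ, ‖z‖ ≤ R → ‖F z a‖ ≤ g a) :
    Differentiable ℂ (fun z => ∫ a, F z a ∂μ) := by
  intro z0
  obtain ⟨g, hg, hgb⟩ := hb (‖z0‖ + 2)
  have hmeas : AEStronglyMeasurable (fun a => deriv (fun z => F z a) z0) μ := by
    have hu : Filter.Tendsto (fun n : ℕ => z0 + 1/((n:ℂ)+1)) Filter.atTop (nhdsWithin z0 {z0}ᶜ) := by
      refine tendsto_nhdsWithin_iff.2 ⟨?_, Filter.Eventually.of_forall fun n => ?_⟩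
      · have := (tendsto_one_div_add_atTop_nhds_zero_nat (𝕜 := ℂ)).const_add z0
        simpa using this
      · have := lg_succ_ne n
        simp [this]
    refine aestronglyMeasurable_of_tendsto_ae Filter.atTop
      (f := fun (n : ℕ) a => slope (fun z => F z a) z0 (z0 + 1/((n:ℂ)+1))) ?_ ?_
    · intro n
      simp only [slope, vsub_eq_sub]
      exact ((hm _).sub (hm _)).const_smul ((z0 + 1/((n:ℂ)+1) - z0)⁻¹)
    · filter_upwards [hd] with a ha
      exact (hasDerivAt_iff_tendsto_slope.1 (ha z0).hasDerivAt).comp hu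
  refine (hasDerivAt_integral_of_dominated_loc_of_deriv_le (bound := g)
    (F' := fun z a => deriv (fun z => F z a) z) (Metric.ball_mem_nhds z0 one_pos)
    (Filter.Eventually.of_forall hm) ?_ hmeas ?_ hg ?_).2.differentiableAt
  · refine Integrable.mono' hg (hm z0) ?_
    filter_upwards [hgb] with a ha using ha z0 (by linarith)
  · filter_upwards [hd, hgb] with a ha hga z hz
    have := Complex.norm_deriv_le_of_forall_mem_sphere_norm_le (c := z) (C := g a) one_pos
      ha.diffContOnCl (fun w hw => hga w ?_)
    · simpa using this
    · have h1 : ‖w - z‖ = 1 := by simpa [dist_eq_norm] using hw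
      have h2 : ‖z - z0‖ < 1 := by simpa [dist_eq_norm] using hz
      calc ‖w‖ = ‖(w - z) + (z - z0) + z0‖ := by congr 1; ring
        _ ≤ ‖w - z‖ + ‖z - z0‖ + ‖z0‖ := norm_add₃_le
        _ ≤ _ := by linarith
  · filter_upwards [hd] with a ha z _ using (ha z).hasDerivAt

lemma lg_norm_cos_le (z : ℂ) : ‖Complex.cos z‖ ≤ Real.exp |z.im| := by
  rw [Complex.cos, norm_div]
  have h2 : ‖(2:ℂ)‖ = 2 := by simp
  rw [h2, div_le_iff₀ (by norm_num)]
  refine (norm_add_le _ _).trans ?_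
  rw [Complex.norm_exp, Complex.norm_exp]
  have e1 : (z * Complex.I).re = -z.im := by simp
  have e2 : (-z * Complex.I).re = z.im := by simp
  rw [e1, e2]
  have a1 := Real.exp_le_exp.2 (neg_le_abs z.im)
  have a2 := Real.exp_le_exp.2 (le_abs_self z.im)
  linarith

lemma lgK_norm_le (ν : ℂ) {u : ℝ} :
    ‖lgK ν u‖ ≤ Real.exp (2 * |ν.im| * |Real.arcsin u|) * (1 / Real.sqrt (1-u^2)) := by
  rw [lgK, norm_div, Complex.norm_real, Real.norm_eq_abs, abs_of_nonneg (Real.sqrt_nonneg _), div_eq_mul_one_div]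
  gcongr
  refine (lg_norm_cos_le _).trans (Real.exp_le_exp.2 (le_of_eq ?_))
  simp [abs_mul]

lemma lgK_half (u : ℝ) : lgK (-1/2) u = ((1 / Real.sqrt (1-u^2) : ℝ) : ℂ) := by
  rw [lgK]
  push_cast
  congr 1
  rw [show (2 * (-1/2:ℂ) + 1) = 0 by ring]; simp

lemma lg_s_mem {x : ℝ} (hx : x ∈ Set.Ioo (-1:ℝ) 1) : 0 < Real.sqrt ((1-x)/2) ∧ Real.sqrt ((1-x)/2) < 1 := by
  refine ⟨Real.sqrt_pos.2 (by linarith [hx.2]), ?_⟩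
  rw [Real.sqrt_lt' one_pos]; linarith [hx.1]

lemma lg_K0_continuous {s : ℝ} (hs0 : 0 < s) (hs1 : s < 1) :
    Continuous fun φ : ℝ => 1 / Real.sqrt (1 - (s * Real.sin φ)^2) := by
  refine Continuous.div continuous_const (by fun_prop) fun φ => ?_
  have := lg_ssin hs0 hs1 φ
  apply (Real.sqrt_pos.2 _).ne'
  nlinarith [this.1, this.2]

lemma lg_growth : ∃ C : ℝ, 0 ≤ C ∧ ∀ (ν : ℂ), ∀ x ∈ Set.Ioo (-1:ℝ) 1,
    ‖legendreP ν x‖ ≤ Real.exp (|ν.im| * Real.arccos x) * (C / lgR (1+x)) := by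
  obtain ⟨C, hC0, hC⟩ := lg_bound (-1/2)
  refine ⟨C, hC0, fun ν x hx => ?_⟩
  obtain ⟨hs0, hs1⟩ := lg_s_mem hx
  have h1 := hC x hx
  have hpi : (0:ℝ) ≤ π/2 := by positivity
  rw [lg_mehler _ hx] at h1 ⊢
  rw [lg_arccos hx]
  set s := Real.sqrt ((1-x)/2)
  simp only [lgK_half] at h1
  rw [intervalIntegral.integral_ofReal, ← Complex.ofReal_mul, Complex.norm_real, Real.norm_eq_abs] at h1
  have hK := lg_K0_continuous hs0 hs1
  have h2 : ‖∫ φ in (0:ℝ)..(π/2), lgK ν (s * Real.sin φ)‖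
      ≤ ∫ φ in (0:ℝ)..(π/2), Real.exp (|ν.im| * (2 * Real.arcsin s)) * (1 / Real.sqrt (1 - (s * Real.sin φ)^2)) := by
    refine intervalIntegral.norm_integral_le_of_norm_le hpi (ae_of_all _ fun φ hφ => ?_)
      ((hK.const_mul _).intervalIntegrable _ _)
    have hsin : 0 ≤ Real.sin φ := Real.sin_nonneg_of_nonneg_of_le_pi hφ.1.le (by linarith [hφ.2])
    refine (lgK_norm_le ν).trans ?_
    gcongr ?_ * _
    apply Real.exp_le_exp.2
    have a1 : 0 ≤ Real.arcsin (s * Real.sin φ) := Real.arcsin_nonneg.2 (by positivity)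
    have a2 : Real.arcsin (s * Real.sin φ) ≤ Real.arcsin s :=
      Real.monotone_arcsin (by nlinarith [Real.sin_le_one φ])
    rw [abs_of_nonneg a1]
    have := abs_nonneg ν.im
    nlinarith
  rw [intervalIntegral.integral_const_mul] at h2
  rw [norm_mul, Complex.norm_real, Real.norm_eq_abs, abs_of_pos (by positivity)]
  calc 2/π * _ ≤ 2/π * _ := mul_le_mul_of_nonneg_left h2 (by positivity)
    _ = Real.exp (|ν.im| * (2 * Real.arcsin s)) * (2/π * ∫ φ in (0:ℝ)..(π/2), 1 / Real.sqrt (1 - (s * Real.sin φ)^2)) := by ring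
    _ ≤ _ := by gcongr; exact (le_abs_self _).trans h1

lemma lg_P_differentiable {x : ℝ} (hx : x ∈ Set.Ioo (-1:ℝ) 1) : Differentiable ℂ (fun ν => legendreP ν x) := by
  obtain ⟨hs0, hs1⟩ := lg_s_mem hx
  have hpi : (0:ℝ) ≤ π/2 := by positivity
  simp only [lg_mehler _ hx]
  apply Differentiable.const_mul
  simp only [intervalIntegral.integral_of_le hpi]
  set s := Real.sqrt ((1-x)/2)
  apply lg_int_differentiable
  · intro z
    exact (lgK_comp_continuous z hs0 hs1).aestronglyMeasurable
  · refine ae_of_all _ fun a => ?_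
    unfold lgK
    fun_prop
  · intro R
    refine ⟨fun φ => Real.exp (2 * R * π) * (1 / Real.sqrt (1 - (s * Real.sin φ)^2)), ?_, ?_⟩
    · have := ((lg_K0_continuous hs0 hs1).const_mul (Real.exp (2 * R * π))).intervalIntegrable (μ := volume) 0 (π/2)
      rwa [intervalIntegrable_iff_integrableOn_Ioc_of_le hpi] at this
    · refine ae_of_all _ fun φ z hz => (lgK_norm_le z).trans ?_
      beta_reduce
      gcongr ?_ * _
      apply Real.exp_le_exp.2
      have h1 := (Complex.abs_im_le_norm z).trans hz
      have h2 : |Real.arcsin (s * Real.sin φ)| ≤ π := by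
        rw [abs_le]
        constructor <;> linarith [Real.neg_pi_div_two_le_arcsin (s * Real.sin φ), Real.arcsin_le_pi_div_two (s * Real.sin φ), Real.pi_pos]
      have := abs_nonneg z.im
      have hR : 0 ≤ R := this.trans h1
      gcongr

lemma lg_f2g_growth : ∃ C : ℝ, 0 ≤ C ∧ ∀ ν : ℂ, ∀ x ∈ Set.Ioo (-1:ℝ) 1,
    ‖(legendreP ν x)^2 * legendreP ν (-x)‖ ≤ Real.exp (2 * π * |ν.im|) * (C * (1 / (lgR (1+x) ^2 * lgR (1-x)))) := by
  obtain ⟨C, hC0, hC⟩ := lg_growth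
  refine ⟨C^3, by positivity, fun ν x hx => ?_⟩
  have h1 := hC ν x hx
  have h2 := hC ν (-x) (lg_neg_mem hx)
  rw [← sub_eq_add_neg, Real.arccos_neg] at h2
  rw [norm_mul, norm_pow]
  have hZ := lgR_pos (show 0 < 1 + x by linarith [hx.1])
  have hY := lgR_pos (show 0 < 1 - x by linarith [hx.2])
  calc _ ≤ (Real.exp (|ν.im| * Real.arccos x) * (C / lgR (1+x)))^2 * (Real.exp (|ν.im| * (π - Real.arccos x)) * (C / lgR (1-x))) := by gcongr
    _ = (Real.exp (|ν.im| * Real.arccos x) * Real.exp (|ν.im| * Real.arccos x) * Real.exp (|ν.im| * (π - Real.arccos x))) * (C^3 * (1 / (lgR (1+x) ^2 * lgR (1-x)))) := by field_simp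
    _ ≤ _ := by
      gcongr ?_ * _
      rw [← Real.exp_add, ← Real.exp_add]
      apply Real.exp_le_exp.2
      have := Real.arccos_le_pi x
      have := abs_nonneg ν.im
      nlinarith

lemma lgB_differentiable : Differentiable ℂ lgB := by
  obtain ⟨C, hC0, hC⟩ := lg_f2g_growth
  have e : lgB = fun ν => ∫ x in Set.Ioo (-1:ℝ) 1, (legendreP ν x)^2 * legendreP ν (-x) := by
    ext ν
    rw [lgB, intervalIntegral.integral_of_le (by norm_num), integral_Ioc_eq_integral_Ioo]
  rw [e]
  apply lg_int_differentiable
  · intro z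
    exact (lg_f2g_continuousOn z).aestronglyMeasurable measurableSet_Ioo
  · refine (ae_restrict_iff' measurableSet_Ioo).2 (ae_of_all _ fun x hx => ?_)
    exact ((lg_P_differentiable hx).pow 2).mul (lg_P_differentiable (lg_neg_mem hx))
  · intro R
    refine ⟨fun x => Real.exp (2 * π * R) * (C * (1 / (lgR (1+x) ^2 * lgR (1-x)))),
      (lg_dom_integrable.const_mul C).const_mul _, ?_⟩
    refine (ae_restrict_iff' measurableSet_Ioo).2 (ae_of_all _ fun x hx z hz => ?_)
    refine (hC z x hx).trans ?_
    have hZ := lgR_pos (show 0 < 1 + x by linarith [hx.1])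
    have hY := lgR_pos (show 0 < 1 - x by linarith [hx.2])
    have h1 := (Complex.abs_im_le_norm z).trans hz
    beta_reduce
    gcongr

lemma lgB_growth : ∃ C : ℝ, 0 ≤ C ∧ ∀ ν : ℂ, ‖lgB ν‖ ≤ C * Real.exp (2 * π * |ν.im|) := by
  obtain ⟨C, hC0, hC⟩ := lg_f2g_growth
  have hi : 0 ≤ ∫ x in Set.Ioo (-1:ℝ) 1, 1 / (lgR (1+x) ^2 * lgR (1-x)) := by
    apply MeasureTheory.integral_nonneg
    intro x
    simp only [lgR, Pi.zero_apply]
    positivity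
  refine ⟨C * ∫ x in Set.Ioo (-1:ℝ) 1, 1 / (lgR (1+x) ^2 * lgR (1-x)), by positivity, fun ν => ?_⟩
  rw [lgB, intervalIntegral.integral_of_le (by norm_num), integral_Ioc_eq_integral_Ioo]
  refine (MeasureTheory.norm_integral_le_of_norm_le ((lg_dom_integrable.const_mul C).const_mul (Real.exp (2 * π * |ν.im|))) ?_).trans ?_
  · exact (ae_restrict_iff' measurableSet_Ioo).2 (ae_of_all _ (hC ν))
  · rw [MeasureTheory.integral_const_mul, MeasureTheory.integral_const_mul]
    exact le_of_eq (by ring)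

lemma lgB_symm (ν : ℂ) : lgB (-1-ν) = lgB ν := by
  have : legendreP (-1-ν) = legendreP ν := by
    ext x
    simp only [legendreP]
    have : ∀ β : ℝ, Complex.cos ((2*(-1-ν)+1) * (β:ℂ)/2) = Complex.cos ((2*ν+1) * (β:ℂ)/2) := by
      intro β
      rw [← Complex.cos_neg]; congr 1; ring
    simp only [this]
  rw [lgB, this, lgB]

lemma lgB_zero : lgB 0 = 2 := by
  have h : ∀ x ∈ Set.Ioo (-1:ℝ) 1, legendreP 0 x = 1 := by
    intro x hx
    rw [lg_series 0 hx, lgPs]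
    have : ∀ k : ℕ, lgA 0 (k+1) = 0 := by
      intro k
      induction k with
      | zero => simp [lgA]
      | succ k ih => rw [lgA, ih]; simp
    rw [tsum_eq_single 0]
    · simp [lgA]
    · intro k hk
      obtain ⟨j, rfl⟩ := Nat.exists_eq_succ_of_ne_zero hk
      rw [this]; simp
  rw [lgB, intervalIntegral.integral_of_le (by norm_num), integral_Ioc_eq_integral_Ioo]
  rw [setIntegral_congr_fun (g := fun _ => (1:ℂ)) measurableSet_Ioo]
  · norm_num
  · intro x hx
    simp [h x hx, h (-x) (lg_neg_mem hx)]

/-- the Gamma side -/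
noncomputable def lgRf (ν : ℂ) : ℂ := ((1 + 2*Complex.cos ((π:ℂ)*ν))/3) * ((π:ℂ)*Complex.Gamma ((ν+1)/2)*Complex.Gamma ((3*ν+2)/2) / ((Complex.Gamma ((1-ν)/2))^2*(Complex.Gamma ((ν+2)/2))^3*Complex.Gamma ((3*ν+3)/2)))

lemma lg_not_int_add {ν : ℂ} (h : ∀ m : ℤ, ν ≠ (m:ℂ)) (k : ℤ) : ν + k ≠ 0 := by
  intro e
  exact h (-k) (by push_cast; linear_combination e)

lemma lgRf_rec (n : ℂ) (hν : ∀ m : ℤ, n ≠ (m:ℂ)) (hν3 : ∀ m : ℤ, 3*n ≠ (m:ℂ)) :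
    (n+2)^2*(3*n+5)*(3*n+7) * lgRf (n+2) = (n+1)^2*(3*n+2)*(3*n+4) * lgRf n := by
  have n1 : n + 1 ≠ 0 := by simpa using lg_not_int_add hν 1
  have n2 : n + 2 ≠ 0 := by simpa using lg_not_int_add hν 2
  have m2 : 3*n + 2 ≠ 0 := by simpa using lg_not_int_add hν3 2
  have m4 : 3*n + 4 ≠ 0 := by simpa using lg_not_int_add hν3 4
  have m5 : 3*n + 5 ≠ 0 := by simpa using lg_not_int_add hν3 5
  have m7 : 3*n + 7 ≠ 0 := by simpa using lg_not_int_add hν3 7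
  have two : (2:ℂ) ≠ 0 := two_ne_zero
  have c : Complex.cos ((π:ℂ)*(n+2)) = Complex.cos ((π:ℂ)*n) := by
    rw [show (π:ℂ)*(n+2) = π*n + 2*π by ring, Complex.cos_add_two_pi]
  have g1 : Complex.Gamma ((n+2+1)/2) = (n+1)/2 * Complex.Gamma ((n+1)/2) := by
    rw [← Complex.Gamma_add_one _ (div_ne_zero n1 two)]; congr 1; ring
  have g2 : Complex.Gamma ((3*(n+2)+2)/2) = (3*n+6)/2 * ((3*n+4)/2 * ((3*n+2)/2 * Complex.Gamma ((3*n+2)/2))) := by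
    rw [← Complex.Gamma_add_one _ (div_ne_zero m2 two), show (3*n+2)/2+1 = (3*n+4)/2 by ring,
      ← Complex.Gamma_add_one _ (div_ne_zero m4 two), show (3*n+4)/2+1 = (3*n+6)/2 by ring,
      ← Complex.Gamma_add_one ((3*n+6)/2) (div_ne_zero (by rw [show 3*n+6 = 3*(n+2) by ring]; simpa using n2) two)]
    congr 1; ring
  have g3 : Complex.Gamma ((1-n)/2) = -(n+1)/2 * Complex.Gamma ((1-(n+2))/2) := by
    rw [show (1-(n+2))/2 = -(n+1)/2 by ring, ← Complex.Gamma_add_one _ (div_ne_zero (neg_ne_zero.2 n1) two)]; congr 1; ring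
  have g4 : Complex.Gamma ((n+2+2)/2) = (n+2)/2 * Complex.Gamma ((n+2)/2) := by
    rw [← Complex.Gamma_add_one _ (div_ne_zero n2 two)]; congr 1; ring
  have g5 : Complex.Gamma ((3*(n+2)+3)/2) = (3*n+7)/2 * ((3*n+5)/2 * ((3*n+3)/2 * Complex.Gamma ((3*n+3)/2))) := by
    rw [← Complex.Gamma_add_one ((3*n+3)/2) (div_ne_zero (by rw [show 3*n+3 = 3*(n+1) by ring]; simpa using n1) two), show (3*n+3)/2+1 = (3*n+5)/2 by ring,
      ← Complex.Gamma_add_one _ (div_ne_zero m5 two), show (3*n+5)/2+1 = (3*n+7)/2 by ring,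
      ← Complex.Gamma_add_one _ (div_ne_zero m7 two)]
    congr 1; ring
  have z1 : Complex.Gamma ((1-(n+2))/2) ≠ 0 := by
    apply Complex.Gamma_ne_zero
    intro m e
    exact hν (2*m-1) (by push_cast; linear_combination -2*e)
  have z2 : Complex.Gamma ((n+2)/2) ≠ 0 := by
    apply Complex.Gamma_ne_zero
    intro m e
    exact hν (-2*m-2) (by push_cast; linear_combination 2*e)
  have z3 : Complex.Gamma ((3*n+3)/2) ≠ 0 := by
    apply Complex.Gamma_ne_zero
    intro m e
    exact hν3 (-2*m-3) (by push_cast; linear_combination 2*e)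
  rw [lgRf, lgRf, c, g1, g2, g3, g4, g5]
  rw [show (3*n+6) = 3*(n+2) by ring, show (3*n+3) = 3*(n+1) by ring] at *
  generalize Complex.Gamma ((1-(n+2))/2) = G1 at *
  generalize Complex.Gamma ((n+2)/2) = G2 at *
  generalize Complex.Gamma (3*(n+1)/2) = G3 at *
  generalize Complex.Gamma ((n+1)/2) = G4 at *
  generalize Complex.Gamma ((3*n+2)/2) = G5 at *
  have m5' : n*3 + 5 ≠ 0 := by rw [mul_comm]; exact m5
  have m7' : n*3 + 7 ≠ 0 := by rw [mul_comm]; exact m7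
  field_simp

lemma lg_gamma_refl (s : ℂ) : Complex.Gamma (1/2 + s) * Complex.Gamma (1/2 - s) = π / Complex.cos (π * s) := by
  have := Complex.Gamma_mul_Gamma_one_sub (1/2+s)
  rw [show 1 - (1/2+s) = 1/2 - s by ring] at this
  rw [this]
  congr 1
  rw [show (π:ℂ) * (1/2+s) = π * s + π/2 by ring, Complex.sin_add_pi_div_two]

lemma lgRf_symm (n : ℂ) (hν : ∀ m : ℤ, n ≠ (m:ℂ)) (hν3 : ∀ m : ℤ, 3*n ≠ (m:ℂ)) :
    lgRf (-1-n) = lgRf n := by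
  have c : Complex.cos ((π:ℂ)*(-1-n)) = -Complex.cos ((π:ℂ)*n) := by
    rw [← Complex.cos_neg, show -((π:ℂ)*(-1-n)) = π*n + π by ring, Complex.cos_add_pi]
  rw [lgRf, lgRf, c]
  rw [show (-1-n+1)/2 = -n/2 by ring, show (3*(-1-n)+2)/2 = (-1-3*n)/2 by ring, show (1-(-1-n))/2 = (n+2)/2 by ring, show (-1-n+2)/2 = (1-n)/2 by ring, show (3*(-1-n)+3)/2 = -3*n/2 by ring]
  have r1 := Complex.Gamma_mul_Gamma_one_sub (-n/2)
  rw [show 1 - (-n/2) = (n+2)/2 by ring, show (π:ℂ) * (-n/2) = -(π*n/2) by ring, Complex.sin_neg] at r1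
  have r2 := lg_gamma_refl (n/2)
  rw [show 1/2 + n/2 = (n+1)/2 by ring, show 1/2-n/2 = (1-n)/2 by ring, show (π:ℂ) * (n/2) = π*n/2 by ring] at r2
  have r3 := Complex.Gamma_mul_Gamma_one_sub (-3*n/2)
  rw [show 1 - (-3*n/2) = (3*n+2)/2 by ring, show (π:ℂ) * (-3*n/2) = -(3*(π*n/2)) by ring, Complex.sin_neg, Complex.sin_three_mul] at r3
  have r4 := lg_gamma_refl ((3*n+2)/2)
  rw [show 1/2 + (3*n+2)/2 = (3*n+3)/2 by ring, show 1/2-(3*n+2)/2 = (-1-3*n)/2 by ring, show (π:ℂ) * ((3*n+2)/2) = 3*(π*n/2) + π by ring, Complex.cos_add_pi, Complex.cos_three_mul] at r4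
  have hc : Complex.cos ((π:ℂ)*n) = 2 * Complex.cos (π*n/2)^2 - 1 := by
    rw [← Complex.cos_two_mul]; congr 1; ring
  have hs := Complex.sin_sq_add_cos_sq ((π:ℂ)*n/2)
  rw [hc]
  have pi0 : (π:ℂ) ≠ 0 := by exact_mod_cast Real.pi_ne_zero
  have z1 : Complex.Gamma ((1-n)/2) ≠ 0 := by
    apply Complex.Gamma_ne_zero
    intro m e
    exact hν (2*m+1) (by push_cast; linear_combination -2*e)
  have z2 : Complex.Gamma ((n+2)/2) ≠ 0 := by
    apply Complex.Gamma_ne_zero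
    intro m e
    exact hν (-2*m-2) (by push_cast; linear_combination 2*e)
  have z3 : Complex.Gamma ((3*n+3)/2) ≠ 0 := by
    apply Complex.Gamma_ne_zero
    intro m e
    exact hν3 (-2*m-3) (by push_cast; linear_combination 2*e)
  have z4 : Complex.Gamma (-3*n/2) ≠ 0 := by
    apply Complex.Gamma_ne_zero
    intro m e
    exact hν3 (2*m) (by push_cast; linear_combination -2*e)
  have y1 : Complex.Gamma (-n/2) ≠ 0 := by
    apply Complex.Gamma_ne_zero
    intro m e
    exact hν (2*m) (by push_cast; linear_combination -2*e)
  have y2 : Complex.Gamma ((n+1)/2) ≠ 0 := by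
    apply Complex.Gamma_ne_zero
    intro m e
    exact hν (-2*m-1) (by push_cast; linear_combination 2*e)
  have y3 : Complex.Gamma ((3*n+2)/2) ≠ 0 := by
    apply Complex.Gamma_ne_zero
    intro m e
    exact hν3 (-2*m-2) (by push_cast; linear_combination 2*e)
  have y4 : Complex.Gamma ((-1-3*n)/2) ≠ 0 := by
    apply Complex.Gamma_ne_zero
    intro m e
    exact hν3 (2*m-1) (by push_cast; linear_combination -2*e)
  generalize Complex.Gamma ((1-n)/2) = A1 at *
  generalize Complex.Gamma ((n+2)/2) = A2 at *
  generalize Complex.Gamma ((3*n+3)/2) = A3 at *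
  generalize Complex.Gamma (-3*n/2) = A4 at *
  generalize Complex.Gamma (-n/2) = B1 at *
  generalize Complex.Gamma ((n+1)/2) = B2 at *
  generalize Complex.Gamma ((3*n+2)/2) = B3 at *
  generalize Complex.Gamma ((-1-3*n)/2) = B4 at *
  generalize Complex.cos ((π:ℂ)*n/2) = C at *
  generalize Complex.sin ((π:ℂ)*n/2) = S at *
  generalize (π:ℂ) = P at *
  have key : (1 + 2 * -(2*C^2-1)) * (B1*A2) * (A3*B4) = (1 + 2*(2*C^2-1)) * (B2*A1) * (A4*B3) := by
    have d1 : -S ≠ 0 := by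
      intro h; rw [h, div_zero] at r1; exact mul_ne_zero y1 z2 r1
    have d2 : C ≠ 0 := by
      intro h; rw [h, div_zero] at r2; exact mul_ne_zero y2 z1 r2
    have d3 : -(3*S-4*S^3) ≠ 0 := by
      intro h; rw [h, div_zero] at r3; exact mul_ne_zero z4 y3 r3
    have d4 : -(4*C^3-3*C) ≠ 0 := by
      intro h; rw [h, div_zero] at r4; exact mul_ne_zero z3 y4 r4
    rw [r1, r2, r3, r4, mul_div_assoc', mul_div_assoc', mul_div_assoc', mul_div_assoc', div_mul_eq_mul_div, div_mul_eq_mul_div, div_div, div_div,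
      div_eq_div_iff (mul_ne_zero d1 d4) (mul_ne_zero d2 d3)]
    have hC2 : C^2 = 1 - S^2 := by linear_combination hs
    have hC3 : C^3 = C * (1 - S^2) := by rw [← hC2]; ring
    rw [hC3, hC2]; ring
  field_simp
  linear_combination key

lemma lg_strip_ne {ν : ℂ} (h : |ν.re| < 2/3) : 1 + 2*Complex.cos ((π:ℂ)*ν) ≠ 0 := by
  intro h0
  have pi0 : (π:ℂ) ≠ 0 := by exact_mod_cast Real.pi_ne_zero
  have e : Complex.sin (3 * (π*ν/2)) = 0 := by
    have hc : Complex.cos ((π:ℂ)*ν) = 2 * Complex.cos (π*ν/2)^2 - 1 := by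
      rw [← Complex.cos_two_mul]; congr 1; ring
    have hs := Complex.sin_sq_add_cos_sq ((π:ℂ)*ν/2)
    rw [hc] at h0
    rw [Complex.sin_three_mul]
    linear_combination Complex.sin (π*ν/2) * h0 - 4*Complex.sin (π*ν/2)*hs
  rw [Complex.sin_eq_zero_iff] at e
  obtain ⟨k, hk⟩ := e
  have e2 : ν = ((2*k/3:ℝ):ℂ) := by
    push_cast
    apply mul_left_cancel₀ pi0
    linear_combination 2/3*hk
  rw [e2, Complex.ofReal_re, abs_lt] at h
  have k0 : k = 0 := by
    have h1 : (-1:ℝ) < k := by linarith [h.1]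
    have h2 : (k:ℝ) < 1 := by linarith [h.2]
    have h1' : -1 < k := by exact_mod_cast h1
    have h2' : k < 1 := by exact_mod_cast h2
    omega
  rw [e2, k0] at h0
  norm_num at h0

lemma lg_re_pos {ν : ℂ} (h : |ν.re| < 2/3) : 0 < ((ν+1)/2).re ∧ 0 < ((3*ν+2)/2).re ∧ 0 < ((1-ν)/2).re ∧
    0 < ((ν+2)/2).re ∧ 0 < ((3*ν+3)/2).re := by
  rw [abs_lt] at h
  simp
  refine ⟨?_, ?_, ?_, ?_, ?_⟩ <;> linarith

lemma lgRf_ne {ν : ℂ} (h : |ν.re| < 2/3) : lgRf ν ≠ 0 := by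
  obtain ⟨h1, h2, h3, h4, h5⟩ := lg_re_pos h
  have := lg_strip_ne h
  have pi0 : (π:ℂ) ≠ 0 := by exact_mod_cast Real.pi_ne_zero
  have := Complex.Gamma_ne_zero_of_re_pos h1
  have := Complex.Gamma_ne_zero_of_re_pos h2
  have := Complex.Gamma_ne_zero_of_re_pos h3
  have := Complex.Gamma_ne_zero_of_re_pos h4
  have := Complex.Gamma_ne_zero_of_re_pos h5
  rw [lgRf]
  simp [*]

lemma lg_gamma_diff {s : ℂ} (h : 0 < s.re) : DifferentiableAt ℂ Complex.Gamma s := by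
  apply Complex.differentiableAt_Gamma
  intro m e
  rw [e] at h
  simp at h
  have : (0:ℝ) ≤ m := by positivity
  linarith

lemma lgRf_diff {ν : ℂ} (h : |ν.re| < 2/3) : DifferentiableAt ℂ lgRf ν := by
  obtain ⟨h1, h2, h3, h4, h5⟩ := lg_re_pos h
  have d1 : DifferentiableAt ℂ (fun ν : ℂ => Complex.Gamma ((ν+1)/2)) ν :=
    DifferentiableAt.comp (g := Complex.Gamma) ν (lg_gamma_diff h1) (by fun_prop)
  have d2 : DifferentiableAt ℂ (fun ν : ℂ => Complex.Gamma ((3*ν+2)/2)) ν :=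
    DifferentiableAt.comp (g := Complex.Gamma) ν (lg_gamma_diff h2) (by fun_prop)
  have d3 : DifferentiableAt ℂ (fun ν : ℂ => Complex.Gamma ((1-ν)/2)) ν :=
    DifferentiableAt.comp (g := Complex.Gamma) ν (lg_gamma_diff h3) (by fun_prop)
  have d4 : DifferentiableAt ℂ (fun ν : ℂ => Complex.Gamma ((ν+2)/2)) ν :=
    DifferentiableAt.comp (g := Complex.Gamma) ν (lg_gamma_diff h4) (by fun_prop)
  have d5 : DifferentiableAt ℂ (fun ν : ℂ => Complex.Gamma ((3*ν+3)/2)) ν :=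
    DifferentiableAt.comp (g := Complex.Gamma) ν (lg_gamma_diff h5) (by fun_prop)
  have := Complex.Gamma_ne_zero_of_re_pos h3
  have := Complex.Gamma_ne_zero_of_re_pos h4
  have := Complex.Gamma_ne_zero_of_re_pos h5
  unfold lgRf
  refine DifferentiableAt.mul (by fun_prop) (DifferentiableAt.div (by fun_prop) (by fun_prop) (by positivity))

lemma lgRf_zero : lgRf 0 = 2 := by
  have pi0 : (π:ℂ) ≠ 0 := by exact_mod_cast Real.pi_ne_zero
  have g : Complex.Gamma (3/2) = 1/2 * Complex.Gamma (1/2) := by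
    rw [← Complex.Gamma_add_one _ (by norm_num)]; norm_num
  have g2 : Complex.Gamma (1/2) ^ 2 = π := by
    have := lg_gamma_refl 0
    simp at this
    simpa [sq] using this
  have g0 : Complex.Gamma (1/2) ≠ 0 := Complex.Gamma_ne_zero_of_re_pos (by norm_num)
  rw [lgRf]
  simp only [mul_zero, zero_add, sub_zero, Complex.cos_zero]
  rw [g, g2, show (2:ℂ)/2 = 1 by norm_num, Complex.Gamma_one]
  field_simp
  norm_num

lemma lg_beta_bound : ∃ K : ℝ, 0 ≤ K ∧ ∀ s : ℂ, 0 < s.re →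
    ‖Complex.Gamma (s+1/2)‖ ≤ K * ‖s‖ * ‖Complex.Gamma s‖ := by
  have hconv := Complex.betaIntegral_convergent (u := 1/2) (v := 1/2) (by norm_num) (by norm_num)
  set I : ℝ := ∫ x in (0:ℝ)..1, ‖(x:ℂ) ^ ((1/2:ℂ)-1) * (1 - (x:ℂ))^((1/2:ℂ)-1)‖ with hI
  have hI0 : 0 ≤ I := intervalIntegral.integral_nonneg (by norm_num) fun x _ => norm_nonneg _
  have g0 : Complex.Gamma (1/2) ≠ 0 := Complex.Gamma_ne_zero_of_re_pos (by norm_num)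
  have g1 : 0 < ‖Complex.Gamma (1/2)‖ := norm_pos_iff.2 g0
  refine ⟨I / ‖Complex.Gamma (1/2)‖, by positivity, fun s hs => ?_⟩
  have hs0 : s ≠ 0 := by rintro rfl; simp at hs
  have h1 := Complex.Gamma_mul_Gamma_eq_betaIntegral (s := s+1/2) (t := 1/2) (by simp; linarith) (by norm_num)
  rw [show s + 1/2+1/2 = s+1 by ring, Complex.Gamma_add_one s hs0] at h1
  have hb : ‖Complex.betaIntegral (s+1/2) (1/2)‖ ≤ I := by
    rw [Complex.betaIntegral]
    refine intervalIntegral.norm_integral_le_of_norm_le (by norm_num) ?_ hconv.norm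
    have : ∀ᵐ x : ℝ ∂volume, x ≠ 1 := by simp [ae_iff]
    filter_upwards [this] with x hx1 hx
    have hx0 : 0 < x := hx.1
    rw [norm_mul, norm_mul]
    gcongr ?_ * _
    rw [Complex.norm_cpow_eq_rpow_re_of_pos hx0, Complex.norm_cpow_eq_rpow_re_of_pos hx0]
    apply Real.rpow_le_rpow_of_exponent_ge hx0 hx.2
    simp; linarith
  have h2 := congrArg norm h1
  rw [norm_mul, norm_mul, norm_mul] at h2
  rw [div_mul_eq_mul_div, div_mul_eq_mul_div, le_div_iff₀ g1, h2]
  calc _ ≤ ‖s‖ * ‖Complex.Gamma s‖ * I := by gcongr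
    _ = _ := by ring

lemma lg_cos_lower {ν : ℂ} (h : |ν.re| ≤ 1/2) :
    Real.exp (π * |ν.im|) / 8 ≤ ‖Complex.cos (π * ν/2)‖^2 := by
  have e : (Complex.cos (π*ν/2)).re = Real.cos (π*ν.re/2) * Real.cosh (π*ν.im/2) := by
    have : (π:ℂ)*ν/2 = ((π*ν.re/2:ℝ):ℂ) + ((π*ν.im/2:ℝ):ℂ) * Complex.I := by
      push_cast
      nth_rewrite 1 [← Complex.re_add_im ν]; ring
    rw [this, Complex.cos_add_mul_I, ← Complex.ofReal_cos, ← Complex.ofReal_cosh, ← Complex.ofReal_sin, ← Complex.ofReal_sinh, ← Complex.ofReal_mul, ← Complex.ofReal_mul]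
    simp only [Complex.sub_re, Complex.ofReal_re, Complex.re_ofReal_mul, Complex.I_re, mul_zero, sub_zero]
  have h1 := Complex.abs_re_le_norm (Complex.cos (π*ν/2))
  rw [e] at h1
  have h2 : (Real.cos (π*ν.re/2) * Real.cosh (π*ν.im/2))^2 ≤ ‖Complex.cos (π * ν/2)‖^2 := by
    rw [← sq_abs]; gcongr
  refine le_trans ?_ h2
  rw [mul_pow]
  have hc : 1/2 ≤ Real.cos (π*ν.re/2)^2 := by
    have hh : Real.cos (π/4) ≤ Real.cos |π*ν.re/2| := by
      apply Real.cos_le_cos_of_nonneg_of_le_pi (abs_nonneg _) (by linarith [Real.pi_pos])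
      rw [abs_div, abs_mul, abs_of_pos Real.pi_pos, abs_of_pos (by norm_num : (0:ℝ)<2)]
      nlinarith [Real.pi_pos]
    rw [Real.cos_abs, Real.cos_pi_div_four] at hh
    have : (√2/2)^2 ≤ Real.cos (π*ν.re/2)^2 := by gcongr
    rw [div_pow, Real.sq_sqrt (by norm_num)] at this
    linarith
  have hch : Real.exp (π * |ν.im|) / 4 ≤ Real.cosh (π*ν.im/2)^2 := by
    have : Real.exp (|π*ν.im/2|) / 2 ≤ Real.cosh (π*ν.im/2) := by
      rw [← Real.cosh_abs, Real.cosh_eq]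
      have := Real.exp_pos (-|π*ν.im/2|)
      linarith
    have e2 : Real.exp (π * |ν.im|) / 4 = (Real.exp (|π*ν.im/2|) / 2)^2 := by
      rw [div_pow, ← Real.exp_nat_mul]
      rw [abs_div, abs_mul, abs_of_pos Real.pi_pos, abs_of_pos (by norm_num : (0:ℝ)<2)]
      push_cast
      norm_num
      ring_nf
    rw [e2]; gcongr
  calc Real.exp (π * |ν.im|) / 8 = 1/2 * (Real.exp (π * |ν.im|) / 4) := by ring
    _ ≤ _ := by gcongr

lemma lg_one_two_cos_lower {ν : ℂ} (h : |ν.re| ≤ 1/2) :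
    Real.exp (π * |ν.im|) / 4 ≤ ‖1 + 2*Complex.cos ((π:ℂ)*ν)‖ := by
  have e : (Complex.cos (π*ν)).re = Real.cos (π*ν.re) * Real.cosh (π*ν.im) := by
    have : (π:ℂ)*ν = ((π*ν.re:ℝ):ℂ) + ((π*ν.im:ℝ):ℂ) * Complex.I := by
      push_cast
      nth_rewrite 1 [← Complex.re_add_im ν]; ring
    rw [this, Complex.cos_add_mul_I, ← Complex.ofReal_cos, ← Complex.ofReal_cosh, ← Complex.ofReal_sin, ← Complex.ofReal_sinh, ← Complex.ofReal_mul, ← Complex.ofReal_mul]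
    simp only [Complex.sub_re, Complex.ofReal_re, Complex.re_ofReal_mul, Complex.I_re, mul_zero, sub_zero]
  have h1 : 1 ≤ ‖1 + 2*Complex.cos ((π:ℂ)*ν)‖ := by
    refine le_trans ?_ (Complex.re_le_norm _)
    have : (1 + 2*Complex.cos ((π:ℂ)*ν)).re = 1 + 2 * (Complex.cos (π*ν)).re := by
      simp
    rw [this, e]
    have : 0 ≤ Real.cos (π*ν.re) := by
      rw [abs_le] at h
      apply Real.cos_nonneg_of_neg_pi_div_two_le_of_le <;> nlinarith [Real.pi_pos]
    have := Real.cosh_pos (π*ν.im)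
    have : 0 ≤ Real.cos (π*ν.re) * Real.cosh (π*ν.im) := by positivity
    linarith
  have h2 : Real.exp (π * |ν.im|) / 2 - 1 ≤ ‖1 + 2*Complex.cos ((π:ℂ)*ν)‖ := by
    have hc : 1 + 2*Complex.cos ((π:ℂ)*ν) = 4 * Complex.cos (π*ν/2)^2 - 1 := by
      rw [show (π:ℂ)*ν = 2*(π*ν/2) by ring, Complex.cos_two_mul]; ring_nf
    rw [hc]
    refine le_trans ?_ (norm_sub_norm_le _ _)
    have := lg_cos_lower h
    rw [norm_mul, norm_pow]
    simp
    linarith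
  linarith

lemma lgRf_inv_bound : ∃ K : ℝ, 0 ≤ K ∧ ∀ ν : ℂ, |ν.re| ≤ 1/2 →
    ‖(lgRf ν)⁻¹‖ ≤ K * (1 + |ν.im|)^4 / Real.exp (2 * π * |ν.im|) := by
  obtain ⟨K, hK0, hK⟩ := lg_beta_bound
  refine ⟨3/π * 4 * K^3 * π^2 * 8 * K * 2, by positivity, fun ν h => ?_⟩
  have h' : |ν.re| < 2/3 := by linarith
  obtain ⟨h1, h2, h3, h4, h5⟩ := lg_re_pos h'
  have b1 := hK _ h1
  have b2 := hK _ h2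
  rw [show (ν+1)/2+1/2 = (ν+2)/2 by ring] at b1
  rw [show (3*ν+2)/2+1/2 = (3*ν+3)/2 by ring] at b2
  have c1 := lg_cos_lower h
  have c2 := lg_one_two_cos_lower h
  have hE := Real.exp_pos (π * |ν.im|)
  have hEE : Real.exp (2 * π * |ν.im|) = Real.exp (π * |ν.im|)^2 := by
    rw [← Real.exp_nat_mul]; push_cast; ring_nf
  rw [hEE]
  have hn : ‖ν‖ ≤ 1/2 + |ν.im| := (Complex.norm_le_abs_re_add_abs_im ν).trans (by linarith)
  have n1 : ‖(ν+1)/2‖ ≤ 1 + |ν.im| := by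
    rw [norm_div]
    have := norm_add_le ν 1
    simp only [norm_one, Complex.norm_ofNat] at this ⊢
    have := abs_nonneg ν.im
    linarith
  have n2 : ‖(3*ν+2)/2‖ ≤ 2 * (1 + |ν.im|) := by
    rw [norm_div]
    have := norm_add_le (3*ν) 2
    rw [norm_mul] at this
    simp only [Complex.norm_ofNat] at this ⊢
    have := abs_nonneg ν.im
    linarith
  have r2 := congrArg norm (lg_gamma_refl (ν/2))
  rw [show 1/2 + ν/2 = (ν+1)/2 by ring, show 1/2-ν/2 = (1-ν)/2 by ring, show (π:ℂ) * (ν/2) = π*ν/2 by ring,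
    norm_mul, norm_div, Complex.norm_real, Real.norm_eq_abs, abs_of_pos Real.pi_pos] at r2
  have z1 := norm_pos_iff.2 (Complex.Gamma_ne_zero_of_re_pos h1)
  have z2 := norm_pos_iff.2 (Complex.Gamma_ne_zero_of_re_pos h2)
  have z3 := norm_pos_iff.2 (Complex.Gamma_ne_zero_of_re_pos h3)
  have e : ‖(lgRf ν)⁻¹‖ = 3 / π / ‖1 + 2*Complex.cos ((π:ℂ)*ν)‖ * (‖Complex.Gamma ((1-ν)/2)‖^2 * ‖Complex.Gamma ((ν+2)/2)‖^3 / ‖Complex.Gamma ((ν+1)/2)‖) * (‖Complex.Gamma ((3*ν+3)/2)‖/‖Complex.Gamma ((3*ν+2)/2)‖) := by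
    rw [lgRf]
    simp only [norm_inv, norm_mul, norm_div, norm_pow, Complex.norm_real, Real.norm_eq_abs, abs_of_pos Real.pi_pos, Complex.norm_ofNat]
    have t1 : 0 < ‖1 + 2*Complex.cos ((π:ℂ)*ν)‖ := lt_of_lt_of_le (by positivity) c2
    have := norm_pos_iff.2 (Complex.Gamma_ne_zero_of_re_pos h4)
    have := norm_pos_iff.2 (Complex.Gamma_ne_zero_of_re_pos h5)
    field_simp
  rw [e]
  have e1 : ‖Complex.Gamma ((1-ν)/2)‖^2 * ‖Complex.Gamma ((ν+2)/2)‖^3 / ‖Complex.Gamma ((ν+1)/2)‖ ≤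
      (K * (1+|ν.im|))^3 * (π^2 / (Real.exp (π * |ν.im|) / 8)) := by
    calc _ ≤ ‖Complex.Gamma ((1-ν)/2)‖^2 * (K * ‖(ν+1)/2‖ * ‖Complex.Gamma ((ν+1)/2)‖)^3 / ‖Complex.Gamma ((ν+1)/2)‖ := by gcongr
      _ = (K * ‖(ν+1)/2‖)^3 * (‖Complex.Gamma ((ν+1)/2)‖ * ‖Complex.Gamma ((1-ν)/2)‖)^2 := by field_simp
      _ = (K * ‖(ν+1)/2‖)^3 * (π^2 / ‖Complex.cos (π*ν/2)‖^2) := by rw [r2, div_pow]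
      _ ≤ _ := by gcongr
  have e2 : ‖Complex.Gamma ((3*ν+3)/2)‖/‖Complex.Gamma ((3*ν+2)/2)‖ ≤ K * (2 * (1 + |ν.im|)) := by
    rw [div_le_iff₀ z2]
    exact b2.trans (by gcongr)
  calc _ ≤ 3 / π / (Real.exp (π * |ν.im|) / 4) * ((K * (1+|ν.im|))^3 * (π^2 / (Real.exp (π * |ν.im|) / 8))) * (K * (2 * (1 + |ν.im|))) := by gcongr
    _ = _ := by field_simp

noncomputable def lgPhi (w : ℂ) : ℂ := lgB w / lgRf w

lemma lgPhi_diff {w : ℂ} (h : |w.re| < 2/3) : DifferentiableAt ℂ lgPhi w :=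
  (lgB_differentiable w).div (lgRf_diff h) (lgRf_ne h)

lemma lgPhi_bound : ∃ K : ℝ, 0 ≤ K ∧ ∀ ν : ℂ, |ν.re| ≤ 1/2 → ‖lgPhi ν‖ ≤ K * (1 + |ν.im|)^4 := by
  obtain ⟨K, hK0, hK⟩ := lgRf_inv_bound
  obtain ⟨C, hC0, hC⟩ := lgB_growth
  refine ⟨C*K, by positivity, fun ν h => ?_⟩
  rw [lgPhi, div_eq_mul_inv, norm_mul]
  have hE := Real.exp_pos (2 * π * |ν.im|)
  calc _ ≤ (C * Real.exp (2 * π * |ν.im|)) * (K * (1 + |ν.im|)^4 / Real.exp (2 * π * |ν.im|)) :=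
        mul_le_mul (hC ν) (hK ν h) (norm_nonneg _) (by positivity)
    _ = _ := by field_simp

lemma lg_re_ne {w : ℂ} {a : ℤ} (h1 : (a:ℝ) < w.re) (h2 : w.re < a + 1) (m : ℤ) : w ≠ (m:ℂ) := by
  rintro rfl
  simp at h1 h2
  have h2' : m < a + 1 := by exact_mod_cast h2
  omega

lemma lgPhi_refl_neg {w : ℂ} (h1 : -(2/3) < w.re) (h2 : w.re < -(1/3)) : lgPhi (-1-w) = lgPhi w := by
  rw [lgPhi, lgPhi, lgB_symm, lgRf_symm]
  · exact lg_re_ne (a := -1) (by push_cast; linarith) (by push_cast; linarith)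
  · exact lg_re_ne (a := -2) (by simp; linarith) (by simp; linarith)

lemma lgPhi_refl_pos {w : ℂ} (h1 : 1/3 < w.re) (h2 : w.re < 2/3) : lgPhi (1-w) = lgPhi w := by
  have k1 : ∀ m : ℤ, w - 2 ≠ (m:ℂ) := lg_re_ne (a := -2) (by simp; linarith) (by simp; linarith)
  have k2 : ∀ m : ℤ, 3 * (w-2) ≠ (m:ℂ) := lg_re_ne (a := -5) (by simp; linarith) (by simp; linarith)
  have k3 : ∀ m : ℤ, 3 * w ≠ (m:ℂ) := lg_re_ne (a := 1) (by simp; linarith) (by simp; linarith)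
  have r1 := lgB_rec _ k1
  have r2 := lgRf_rec _ k1 k2
  have s1 := lgB_symm (w-2)
  have s2 := lgRf_symm _ k1 k2
  rw [show -1 - (w-2) = 1 - w by ring] at s1 s2
  have n1 : lgRf w ≠ 0 := lgRf_ne (by rw [abs_lt]; constructor <;> linarith)
  have n2 : lgRf (1-w) ≠ 0 := lgRf_ne (by rw [abs_lt]; simp; constructor <;> linarith)
  rw [← s1] at r1
  rw [← s2] at r2
  rw [show w - 2 + 2 = w by ring] at r1 r2
  have a1 : w ≠ 0 := by rintro rfl; simp at h1; linarith
  have a2 : 3 * (w-2) + 5 ≠ 0 := fun h => k3 1 (by push_cast; linear_combination h)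
  have a3 : 3 * (w-2) + 7 ≠ 0 := fun h => k3 (-1) (by push_cast; linear_combination h)
  rw [lgPhi, lgPhi, div_eq_div_iff n2 n1]
  apply mul_left_cancel₀ (mul_ne_zero (mul_ne_zero (pow_ne_zero 2 a1) a2) a3)
  have b1 : w - 2 + 1 ≠ 0 := fun h => k1 (-1) (by push_cast; linear_combination h)
  have b2 : 3 * (w-2) + 2 ≠ 0 := fun h => k3 4 (by push_cast; linear_combination h)
  have b3 : 3 * (w-2) + 4 ≠ 0 := fun h => k3 2 (by push_cast; linear_combination h)
  linear_combination lgB (1-w) * r2 - lgRf (1-w) * r1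

/-- sign -/
noncomputable def lgSg (n : ℤ) : ℂ := if Even n then 1 else -1

noncomputable def lgKap (z : ℂ) : ℂ := lgPhi (lgSg (round z.re) * (z - (round z.re : ℤ)))

lemma lgKap_eq (n : ℤ) {z : ℂ} (h : |z.re - n| < 2/3) : lgKap z = lgPhi (lgSg n * (z - n)) := by
  rw [lgKap]
  have h1 := abs_sub_round z.re
  generalize round z.re = m at *
  rw [abs_lt] at h
  rw [abs_le] at h1
  have c1 : m < n + 2 := by
    have : (m:ℝ) < n + 2 := by linarith
    exact_mod_cast this
  have c2 : n < m + 2 := by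
    have : (n:ℝ) < m + 2 := by linarith
    exact_mod_cast this
  have hc : m = n ∨ m = n + 1 ∨ m = n - 1 := by omega
  rcases hc with rfl | rfl | rfl
  · rfl
  · push_cast at h1 ⊢
    by_cases he : Even n
    · have ho : ¬ Even (n+1) := by rw [Int.even_add_one]; simpa using he
      simp only [lgSg, if_pos he, if_neg ho]
      rw [← lgPhi_refl_pos (w := 1 * (z - n)) (by simp; linarith) (by simp; linarith)]
      congr 1; ring
    · have ho : Even (n+1) := by rw [Int.even_add_one]; exact he
      simp only [lgSg, if_neg he, if_pos ho]
      rw [← lgPhi_refl_neg (w := -1 * (z - n)) (by simp; linarith) (by simp; linarith)]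
      congr 1; ring
  · push_cast at h1 ⊢
    by_cases he : Even n
    · have ho : ¬ Even (n-1) := by rw [Int.even_sub_one]; simpa using he
      simp only [lgSg, if_pos he, if_neg ho]
      rw [← lgPhi_refl_neg (w := 1 * (z - n)) (by simp; linarith) (by simp; linarith)]
      congr 1; ring
    · have ho : Even (n-1) := by rw [Int.even_sub_one]; exact he
      simp only [lgSg, if_neg he, if_pos ho]
      rw [← lgPhi_refl_pos (w := -1 * (z - n)) (by simp; linarith) (by simp; linarith)]
      congr 1; ring

lemma lgSg_re (n : ℤ) (z : ℂ) : |(lgSg n * z).re| = |z.re| ∧ |(lgSg n * z).im| = |z.im| := by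
  unfold lgSg
  split_ifs <;> simp

lemma lgKap_diff : Differentiable ℂ lgKap := by
  intro z
  set n := round z.re with hn
  have h1 := abs_sub_round z.re
  rw [← hn] at h1
  have hopen : {w : ℂ | |w.re - n| < 2/3} ∈ nhds z := by
    apply IsOpen.mem_nhds
    · exact isOpen_lt (by fun_prop) (by fun_prop)
    · change |z.re - n| < 2/3
      linarith
  have e : lgKap =ᶠ[nhds z] fun w => lgPhi (lgSg n * (w - n)) := by
    filter_upwards [hopen] with w hw using lgKap_eq n hw
  refine DifferentiableAt.congr_of_eventuallyEq ?_ e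
  refine DifferentiableAt.comp (g := lgPhi) z (lgPhi_diff ?_) (by fun_prop)
  rw [(lgSg_re n _).1]
  simp
  linarith

lemma lgKap_bound : ∃ K : ℝ, 0 ≤ K ∧ ∀ z : ℂ, ‖lgKap z‖ ≤ K * (1 + ‖z‖)^4 := by
  obtain ⟨K, hK0, hK⟩ := lgPhi_bound
  refine ⟨K, hK0, fun z => ?_⟩
  rw [lgKap]
  refine (hK _ ?_).trans ?_
  · rw [(lgSg_re _ _).1]
    simpa using abs_sub_round z.re
  · rw [(lgSg_re _ _).2]
    have : |(z - (round z.re : ℤ)).im| = |z.im| := by simp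
    rw [this]
    have := Complex.abs_im_le_norm z
    gcongr

lemma lgKap_periodic (z : ℂ) : lgKap (z+2) = lgKap z := by
  have e : round (z+2).re = round z.re + 2 := by
    have := round_add_intCast z.re 2
    simpa using this
  rw [lgKap, e, lgKap]
  have : lgSg (round z.re + 2) = lgSg (round z.re) := by
    simp [lgSg, Int.even_add]
  rw [this]
  congr 2
  push_cast; ring

lemma lg_periodic_descend {g : ℂ → ℂ} (hg : Differentiable ℂ g) (hp : ∀ z, g (z+2) = g z)
    (h2 : ∀ z, deriv (deriv g) z = 0) : ∀ z, deriv g z = 0 := by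
  have hd : Differentiable ℂ (deriv g) := (hg.contDiff (n := 2)).differentiable_deriv_two
  have hc : ∀ z, deriv g z = deriv g 0 := fun z => is_const_of_deriv_eq_zero hd h2 z 0
  have h3 : ∀ z, g z - deriv g 0 * z = g 0 - deriv g 0 * 0 := by
    intro z
    refine is_const_of_deriv_eq_zero (f := fun z => g z - deriv g 0 * z) (by fun_prop) (fun w => ?_) z 0
    have := ((hg w).hasDerivAt.fun_sub ((hasDerivAt_id w).const_mul (deriv g 0))).deriv
    rw [hc w] at this
    simpa using this
  have h4 := h3 2
  have h5 := hp 0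
  rw [zero_add] at h5
  rw [h5] at h4
  have : deriv g 0 = 0 := by
    linear_combination (-1/2) * h4
  intro z; rw [hc z, this]

lemma lgKap_const (z : ℂ) : lgKap z = lgKap 0 := by
  obtain ⟨K, hK0, hK⟩ := lgKap_bound
  have h5 : ∀ z, iteratedDeriv 5 lgKap z = 0 := by
    intro z
    have hb : ∀ R : ℝ, 1 + ‖z‖ < R → ‖iteratedDeriv 5 lgKap z‖ ≤ (120 * K * 16) * R⁻¹ := by
      intro R hR
      have hR0 : 0 < R := lt_of_le_of_lt (by positivity) hR
      have := Complex.norm_iteratedDeriv_le_of_forall_mem_sphere_norm_le (n := 5) (c := z) (C := K * (2*R)^4) hR0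
        lgKap_diff.diffContOnCl (fun w hw => by
          refine (hK w).trans ?_
          have h1 : ‖w - z‖ = R := by simpa [dist_eq_norm] using hw
          have h2 : ‖w‖ ≤ ‖w - z‖ + ‖z‖ := by simpa using norm_add_le (w-z) z
          gcongr
          linarith)
      refine this.trans (le_of_eq ?_)
      have : (Nat.factorial 5 : ℝ) = 120 := by norm_num [Nat.factorial]
      rw [this]
      field_simp
      ring
    have ht : Filter.Tendsto (fun R : ℝ => (120 * K * 16) * R⁻¹) Filter.atTop (nhds 0) := by
      simpa using tendsto_inv_atTop_zero.const_mul (120 * K * 16)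
    have := ge_of_tendsto ht ((Filter.eventually_gt_atTop (1 + ‖z‖)).mono hb)
    exact norm_le_zero_iff.1 this
  have hcd : ContDiff ℂ ⊤ lgKap := lgKap_diff.contDiff
  have hdk : ∀ k, Differentiable ℂ (iteratedDeriv k lgKap) := fun k =>
    hcd.differentiable_iteratedDeriv k (by exact WithTop.coe_lt_top _)
  have hpk : ∀ k, ∀ z, iteratedDeriv k lgKap (z+2) = iteratedDeriv k lgKap z := by
    intro k
    induction k with
    | zero => simpa using lgKap_periodic
    | succ k ih =>
      intro z
      rw [iteratedDeriv_succ]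
      have := deriv_comp_add_const (iteratedDeriv k lgKap) 2 z
      rw [← this]
      congr 1
      ext w; exact ih w
  have step : ∀ k, (∀ z, iteratedDeriv (k+2) lgKap z = 0) → ∀ z, iteratedDeriv (k+1) lgKap z = 0 := by
    intro k h z
    rw [iteratedDeriv_succ]
    refine lg_periodic_descend (hdk k) (hpk k) (fun w => ?_) z
    have := h w
    rwa [iteratedDeriv_succ, iteratedDeriv_succ] at this
  have h1 := step 0 (step 1 (step 2 (step 3 h5)))
  refine is_const_of_deriv_eq_zero lgKap_diff (fun w => ?_) z 0
  have := h1 w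
  rwa [zero_add, iteratedDeriv_one] at this

lemma lg_eq_strip {w : ℂ} (h : |w.re| < 2/3) : lgB w = lgRf w := by
  have e0 : ∀ w : ℂ, |w.re| < 2/3 → lgKap w = lgPhi w := by
    intro w h
    rw [lgKap_eq 0 (by simpa using h)]
    simp [lgSg]
  have h1 := lgKap_const w
  rw [e0 w h, e0 0 (by simp), lgPhi, lgPhi, lgB_zero, lgRf_zero, div_self two_ne_zero, div_eq_one_iff_eq (lgRf_ne h)] at h1
  exact h1

lemma lg_adm_shift {ν : ℂ} (hν : ∀ m : ℤ, ν ≠ (m:ℂ)) (k : ℤ) : ∀ m : ℤ, ν + k ≠ (m:ℂ) := by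
  intro m h
  exact hν (m - k) (by push_cast; linear_combination h)

lemma lg_step {ν : ℂ} (hν : ∀ m : ℤ, ν ≠ (m:ℂ)) (hν3 : ∀ m : ℤ, 3*ν ≠ (m:ℂ)) :
    lgB (ν+2) = lgRf (ν+2) ↔ lgB ν = lgRf ν := by
  have r1 := lgB_rec _ hν
  have r2 := lgRf_rec _ hν hν3
  have n1 : ν + 1 ≠ 0 := by simpa using lg_not_int_add hν 1
  have n2 : ν + 2 ≠ 0 := by simpa using lg_not_int_add hν 2
  have m2 : 3*ν + 2 ≠ 0 := by simpa using lg_not_int_add hν3 2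
  have m4 : 3*ν + 4 ≠ 0 := by simpa using lg_not_int_add hν3 4
  have m5 : 3*ν + 5 ≠ 0 := by simpa using lg_not_int_add hν3 5
  have m7 : 3*ν + 7 ≠ 0 := by simpa using lg_not_int_add hν3 7
  constructor
  · intro h
    apply mul_left_cancel₀ (mul_ne_zero (mul_ne_zero (pow_ne_zero 2 n1) m2) m4)
    rw [← r1, ← r2, h]
  · intro h
    apply mul_left_cancel₀ (mul_ne_zero (mul_ne_zero (pow_ne_zero 2 n2) m5) m7)
    rw [r1, r2, h]

lemma lg_final (ν : ℂ) (hν : ∀ m : ℤ, ν ≠ (m:ℂ)) (hν3 : ∀ m : ℤ, 3*ν ≠ (m:ℂ)) : lgB ν = lgRf ν := by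
  have all : ∀ μ : ℂ, (∀ m : ℤ, μ ≠ (m:ℂ)) → (∀ m : ℤ, 3*μ ≠ (m:ℂ)) → lgB μ = lgRf μ →
      ∀ k : ℤ, lgB (μ + 2*k) = lgRf (μ + 2*k) := by
    intro μ h1 h3 h0 k
    have a1 : ∀ j : ℤ, ∀ m : ℤ, μ + 2*j ≠ (m:ℂ) := fun j => by
      have := lg_adm_shift h1 (2*j); push_cast at this; exact this
    have a3 : ∀ j : ℤ, ∀ m : ℤ, 3*(μ + 2*j) ≠ (m:ℂ) := fun j m h => by
      have := lg_adm_shift h3 (6*j) m; push_cast at this; exact this (by linear_combination h)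
    induction k with
    | zero => simpa using h0
    | succ i ih =>
      have := (lg_step (a1 i) (a3 i)).2 ih
      push_cast at this ⊢
      rwa [show μ + 2 * ((i:ℂ)+1) = μ + 2 * i + 2 by ring]
    | pred i ih =>
      refine (lg_step (a1 (-i-1)) (a3 (-i-1))).1 ?_
      push_cast at ih ⊢
      rwa [show μ + 2 * (-(i:ℂ)-1) + 2 = μ + 2 * -i by ring]
  set k := round ((ν.re + 1/2)/2) with hk
  have h1 := abs_sub_round ((ν.re + 1/2)/2)
  rw [← hk, abs_le] at h1
  have b1 : ∀ m : ℤ, ν - 2*k ≠ (m:ℂ) := fun m h => hν (m+2*k) (by push_cast; linear_combination h)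
  have b3 : ∀ m : ℤ, 3*(ν - 2*k) ≠ (m:ℂ) := fun m h => hν3 (m+6*k) (by push_cast; linear_combination h)
  have base : lgB (ν - 2*k) = lgRf (ν - 2*k) := by
    have re : (ν - 2*k).re = ν.re - 2*k := by simp
    by_cases hr : -(1/2) ≤ (ν - 2*k).re
    · apply lg_eq_strip
      rw [abs_lt]; constructor <;> linarith
    · rw [← lgB_symm, ← lgRf_symm _ b1 b3]
      apply lg_eq_strip
      have : (-1 - (ν - 2*k)).re = -1 - (ν - 2*k).re := by simp
      rw [abs_lt]; constructor <;> linarith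
  have := all _ b1 b3 base k
  rwa [sub_add_cancel] at this

/-- Generalized Clebsch–Gordan integral of three Legendre functions of equal degree. -/
theorem stmt_6 (ν : ℂ) (hν : ∀ m : ℤ, ν ≠ (m : ℂ)) (hν3 : ∀ m : ℤ, 3*ν ≠ (m : ℂ)) :
    (∫ x in (-1:ℝ)..1, (legendreP ν x)^2 * legendreP ν (-x))
      = ((1 + 2 * Complex.cos ((π:ℂ) * ν)) / 3) *
        ((π:ℂ) * Complex.Gamma ((ν+1)/2) * Complex.Gamma ((3*ν+2)/2)
          / ((Complex.Gamma ((1-ν)/2))^2 * (Complex.Gamma ((ν+2)/2))^3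
              * Complex.Gamma ((3*ν+3)/2))) := by
  exact lg_final ν hν hν3
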